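/- arXiv:math/0003018 — 5 statements merged into one kernel-verified Lean document; each statement's English description precedes it below -/
import Mathlib

section
/- For all nonnegative integers a, b, c, the even moment over the unit sphere is given in closed form by ∫_{U₃} x^{2a} y^{2b} z^{2c} dσ = 4π · (2a)! (2b)! (2c)! (a + b + c)! / ( (2a + 2b + 2c + 1)! · a! · b! · c! ). In particular this formula reproduces every entry of the table of moments over U₃ (e.g. ∫_{U₃} x² y² z² dσ = 4π/105). -/
open MeasureTheory

/- Integrate `∏ |x i| ^ s i * exp (-‖x‖ ^ 2)` over Euclidean space in two ways. In Cartesian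
coordinates it splits into one-dimensional integrals, each a value of the Gamma function. In polar
coordinates homogeneity splits it into the desired integral over the sphere and a radial integral,
again a value of the Gamma function. For even exponents all these values are taken at
half-integers, and in odd dimension the powers of `√π` combine into a power of `π`. -/

section PolarCoordinates

variable {𝕜 E : Type*} [RCLike 𝕜] [NormedAddCommGroup E] [NormedSpace ℝ E] [Nontrivial E]
  [FiniteDimensional ℝ E] [MeasurableSpace E] [BorelSpace E]

lemma integral_volumeIoiPow {F : Type*} [NormedAddCommGroup F] [NormedSpace ℝ F]
    (n : ℕ) (g : ℝ → F) :
    ∫ r : Set.Ioi (0 : ℝ), g r ∂Measure.volumeIoiPow n = ∫ r in Set.Ioi (0 : ℝ), r ^ n • g r := by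
  simp only [Measure.volumeIoiPow, ENNReal.ofReal]
  rw [integral_withDensity_eq_integral_smul (by fun_prop),
    integral_subtype_comap measurableSet_Ioi fun r : ℝ ↦ (r ^ n).toNNReal • g r]
  refine setIntegral_congr_fun measurableSet_Ioi fun r hr ↦ ?_
  simp only [NNReal.smul_def, Real.coe_toNNReal _ (pow_nonneg (Set.mem_Ioi.1 hr).le n)]

lemma integral_fun_direction_mul_fun_norm (μ : Measure E) [μ.IsAddHaarMeasure]
    (f : E → 𝕜) (g : ℝ → 𝕜) :
    ∫ x, f (‖x‖⁻¹ • x) * g ‖x‖ ∂μ =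
      (∫ v : Metric.sphere (0 : E) 1, f v ∂μ.toSphere) *
        ∫ r in Set.Ioi (0 : ℝ), r ^ (Module.finrank ℝ E - 1) • g r :=
  calc
    ∫ x, f (‖x‖⁻¹ • x) * g ‖x‖ ∂μ
      = ∫ x : ({0}ᶜ : Set E), f (‖x.1‖⁻¹ • x.1) * g ‖x.1‖ ∂μ.comap (↑) := by
        rw [integral_subtype_comap (measurableSet_singleton _).compl
          fun x ↦ f (‖x‖⁻¹ • x) * g ‖x‖, restrict_compl_singleton]
    _ = ∫ p, f p.1 * g p.2 ∂μ.toSphere.prod (.volumeIoiPow (Module.finrank ℝ E - 1)) := by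
        simpa using μ.measurePreserving_homeomorphUnitSphereProd.integral_comp
          (Homeomorph.measurableEmbedding _)
          fun p : Metric.sphere (0 : E) 1 × Set.Ioi (0 : ℝ) ↦ f p.1 * g p.2
    _ = (∫ v : Metric.sphere (0 : E) 1, f v ∂μ.toSphere) *
          ∫ r : Set.Ioi (0 : ℝ), g r ∂Measure.volumeIoiPow (Module.finrank ℝ E - 1) :=
        integral_prod_mul (fun v : Metric.sphere (0 : E) 1 ↦ f v)
          fun r : Set.Ioi (0 : ℝ) ↦ g r
    _ = _ := by rw [integral_volumeIoiPow]

lemma integral_homogeneous_mul_fun_norm (μ : Measure E) [μ.IsAddHaarMeasure]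
    {f : E → 𝕜} {s : ℝ} (hf : ∀ r : ℝ, 0 < r → ∀ x, f (r • x) = r ^ s • f x) (g : ℝ → 𝕜) :
    ∫ x, f x * g ‖x‖ ∂μ =
      (∫ v : Metric.sphere (0 : E) 1, f v ∂μ.toSphere) *
        ∫ r in Set.Ioi (0 : ℝ), r ^ (s + Module.finrank ℝ E - 1) • g r := by
  have hpolar : ∀ᵐ x ∂μ, f x * g ‖x‖ = f (‖x‖⁻¹ • x) * (‖x‖ ^ s • g ‖x‖) := by
    filter_upwards [Measure.ae_ne μ 0] with x hx
    have hx' : 0 < ‖x‖ := norm_pos_iff.2 hx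
    rw [mul_smul_comm, ← smul_mul_assoc, ← hf _ hx', smul_inv_smul₀ hx'.ne']
  rw [integral_congr_ae hpolar,
    integral_fun_direction_mul_fun_norm μ f fun r ↦ r ^ s • g r]
  congr 1
  refine setIntegral_congr_fun measurableSet_Ioi fun r hr ↦ ?_
  have hr' : 0 < r := hr
  rw [smul_smul, ← Real.rpow_natCast, ← Real.rpow_add hr', Nat.cast_pred Module.finrank_pos]
  ring_nf

end PolarCoordinates

lemma integral_Ioi_rpow_mul_exp_neg_sq {s : ℝ} (hs : -1 < s) :
    ∫ x in Set.Ioi (0 : ℝ), x ^ s * Real.exp (-x ^ 2) = Real.Gamma ((s + 1) / 2) / 2 := by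
  have h := integral_rpow_mul_exp_neg_rpow two_pos hs
  simp only [Real.rpow_two] at h
  rw [h, one_div_mul_eq_div]

lemma integral_abs_rpow_mul_exp_neg_sq {s : ℝ} (hs : -1 < s) :
    ∫ x : ℝ, |x| ^ s * Real.exp (-x ^ 2) = Real.Gamma ((s + 1) / 2) := by
  have h := integral_comp_abs (f := fun x : ℝ ↦ x ^ s * Real.exp (-x ^ 2))
  simp only [sq_abs] at h
  rw [h, integral_Ioi_rpow_mul_exp_neg_sq hs, mul_div_cancel₀ _ two_ne_zero]

open scoped Nat in
lemma Gamma_natCast_add_half_eq_factorial (n : ℕ) :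
    Real.Gamma (n + 1 / 2) = (2 * n)! / (4 ^ n * n !) * √Real.pi := by
  induction n with
  | zero => simpa using Real.Gamma_one_half_eq
  | succ n ih =>
    have hshift : ((n + 1 : ℕ) : ℝ) + 1 / 2 = (n + 1 / 2) + 1 := by push_cast; ring
    rw [hshift, Real.Gamma_add_one (by positivity), ih, Nat.mul_add_one,
      Nat.factorial_succ (2 * n + 1), Nat.factorial_succ (2 * n), Nat.factorial_succ n]
    push_cast
    field_simp
    ring

section EuclideanSpace

variable {ι : Type*} [Fintype ι]

lemma integral_prod_abs_rpow_mul_exp_neg_norm_sq {s : ι → ℝ} (hs : ∀ i, -1 < s i) :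
    ∫ x : EuclideanSpace ℝ ι, (∏ i, |x i| ^ s i) * Real.exp (-‖x‖ ^ 2) =
      ∏ i, Real.Gamma ((s i + 1) / 2) :=
  calc
    ∫ x : EuclideanSpace ℝ ι, (∏ i, |x i| ^ s i) * Real.exp (-‖x‖ ^ 2)
      = ∫ x : ι → ℝ, ∏ i, |x i| ^ s i * Real.exp (-x i ^ 2) := by
        rw [← (PiLp.volume_preserving_toLp ι).integral_comp
          (MeasurableEquiv.toLp 2 (ι → ℝ)).measurableEmbedding]
        simp only [EuclideanSpace.real_norm_sq_eq, Finset.prod_mul_distrib, ← Real.exp_sum,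
          Finset.sum_neg_distrib]
    _ = ∏ i, Real.Gamma ((s i + 1) / 2) := by
        rw [integral_fintype_prod_volume_eq_prod fun i (x : ℝ) ↦ |x| ^ s i * Real.exp (-x ^ 2)]
        exact Finset.prod_congr rfl fun i _ ↦ integral_abs_rpow_mul_exp_neg_sq (hs i)

lemma prod_abs_smul_rpow (s : ι → ℝ) {r : ℝ} (hr : 0 < r) (x : EuclideanSpace ℝ ι) :
    ∏ i, |(r • x) i| ^ s i = r ^ (∑ i, s i) • ∏ i, |x i| ^ s i := by
  simp only [PiLp.smul_apply, smul_eq_mul, abs_mul, abs_of_pos hr,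
    Real.mul_rpow hr.le (abs_nonneg _), Finset.prod_mul_distrib, Real.rpow_sum_of_pos hr]

theorem integral_toSphere_prod_abs_rpow [Nonempty ι] {s : ι → ℝ} (hs : ∀ i, -1 < s i) :
    ∫ v : Metric.sphere (0 : EuclideanSpace ℝ ι) 1, ∏ i, |v.1 i| ^ s i
        ∂(volume : Measure (EuclideanSpace ℝ ι)).toSphere =
      2 * (∏ i, Real.Gamma ((s i + 1) / 2)) / Real.Gamma (∑ i, (s i + 1) / 2) := by
  have hpos : 0 < ∑ i, (s i + 1) / 2 :=
    Finset.sum_pos (fun i _ ↦ by linarith [hs i]) Finset.univ_nonempty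
  have hsum : (∑ i, s i) + Fintype.card ι = 2 * ∑ i, (s i + 1) / 2 := by
    simp only [← Finset.sum_div, Finset.sum_add_distrib, Finset.sum_const, Finset.card_univ,
      nsmul_one, mul_div_cancel₀ _ (two_ne_zero' ℝ)]
  have hradial : ∫ r in Set.Ioi (0 : ℝ),
      r ^ ((∑ i, s i) + Module.finrank ℝ (EuclideanSpace ℝ ι) - 1) • Real.exp (-r ^ 2) =
        Real.Gamma (∑ i, (s i + 1) / 2) / 2 := by
    simp only [finrank_euclideanSpace, hsum, smul_eq_mul]
    rw [integral_Ioi_rpow_mul_exp_neg_sq (by linarith), sub_add_cancel,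
      mul_div_cancel_left₀ _ two_ne_zero]
  have hpolar := integral_homogeneous_mul_fun_norm volume
    (f := fun x : EuclideanSpace ℝ ι ↦ ∏ i, |x i| ^ s i)
    (fun _ hr x ↦ prod_abs_smul_rpow s hr x) fun r ↦ Real.exp (-r ^ 2)
  rw [integral_prod_abs_rpow_mul_exp_neg_norm_sq hs, hradial] at hpolar
  rw [eq_div_iff (Real.Gamma_pos_of_pos hpos).ne', hpolar]
  ring

theorem integral_toSphere_prod_pow_two_mul [Nonempty ι] (k : ι → ℕ) :
    ∫ v : Metric.sphere (0 : EuclideanSpace ℝ ι) 1, ∏ i, v.1 i ^ (2 * k i)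
        ∂(volume : Measure (EuclideanSpace ℝ ι)).toSphere =
      2 * (∏ i, Real.Gamma (k i + 1 / 2)) / Real.Gamma (∑ i, ((k i : ℝ) + 1 / 2)) := by
  have habs (i : ι) (x : ℝ) : |x| ^ (2 * k i : ℝ) = x ^ (2 * k i) := by
    rw [← (even_two_mul (k i)).pow_abs x]
    exact_mod_cast Real.rpow_natCast |x| (2 * k i)
  have hhalf (i : ι) : (2 * k i + 1 : ℝ) / 2 = k i + 1 / 2 := by ring
  simpa only [habs, hhalf] using integral_toSphere_prod_abs_rpow
    (s := fun i ↦ 2 * k i) fun i ↦ by linarith [(k i).cast_nonneg (α := ℝ)]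

open scoped Nat in
theorem sphere_even_moment_closed_form_general {m : ℕ} (hι : Fintype.card ι = 2 * m + 1)
    (k : ι → ℕ) :
    ∫ v : Metric.sphere (0 : EuclideanSpace ℝ ι) 1, ∏ i, v.1 i ^ (2 * k i)
        ∂(volume : Measure (EuclideanSpace ℝ ι)).toSphere =
      2 * (4 * Real.pi) ^ m * (∏ i, (2 * k i)!) * ((∑ i, k i) + m)! /
        ((2 * ((∑ i, k i) + m))! * ∏ i, (k i)!) := by
  have : Nonempty ι := Fintype.card_pos_iff.1 (by lia)
  have hsum : ∑ i, ((k i : ℝ) + 1 / 2) = ((∑ i, k i) + m : ℕ) + 1 / 2 := by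
    simp only [Finset.sum_add_distrib, Finset.sum_const, Finset.card_univ, hι, nsmul_eq_mul]
    push_cast
    ring
  have hpi : √Real.pi ^ (2 * m + 1) = Real.pi ^ m * √Real.pi := by
    rw [pow_succ, pow_mul, Real.sq_sqrt Real.pi_nonneg]
  rw [integral_toSphere_prod_pow_two_mul, hsum]
  simp only [Gamma_natCast_add_half_eq_factorial, Finset.prod_mul_distrib, Finset.prod_div_distrib,
    Finset.prod_const, Finset.card_univ, hι, hpi, Finset.prod_pow_eq_pow_sum, pow_add, mul_pow]
  push_cast
  field_simp

end EuclideanSpace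

/-- For all nonnegative integers `a, b, c`,
`∫_{U₃} x^{2a} y^{2b} z^{2c} dσ
  = 4π * (2a)! (2b)! (2c)! (a+b+c)! / ((2a+2b+2c+1)! a! b! c!)`,
and in particular `∫_{U₃} x² y² z² dσ = 4π/105`. -/
theorem sphere_even_moment_closed_form :
    (∀ a b c : ℕ,
      ∫ v : Metric.sphere (0 : EuclideanSpace ℝ (Fin 3)) 1,
          ((v : EuclideanSpace ℝ (Fin 3)) 0) ^ (2 * a) * ((v : EuclideanSpace ℝ (Fin 3)) 1) ^ (2 * b) *
            ((v : EuclideanSpace ℝ (Fin 3)) 2) ^ (2 * c)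
        ∂((volume : Measure (EuclideanSpace ℝ (Fin 3))).toSphere) =
      4 * Real.pi * (2 * a).factorial * (2 * b).factorial * (2 * c).factorial *
          (a + b + c).factorial /
        ((2 * a + 2 * b + 2 * c + 1).factorial * a.factorial * b.factorial * c.factorial)) ∧
    ∫ v : Metric.sphere (0 : EuclideanSpace ℝ (Fin 3)) 1,
        ((v : EuclideanSpace ℝ (Fin 3)) 0) ^ 2 * ((v : EuclideanSpace ℝ (Fin 3)) 1) ^ 2 *
          ((v : EuclideanSpace ℝ (Fin 3)) 2) ^ 2
      ∂((volume : Measure (EuclideanSpace ℝ (Fin 3))).toSphere) = 4 * Real.pi / 105 := by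
  have closed_form (a b c : ℕ) :=
    sphere_even_moment_closed_form_general (m := 1) (Fintype.card_fin 3) ![a, b, c]
  simp only [Fin.prod_univ_three, Fin.sum_univ_three, Matrix.cons_val] at closed_form
  refine ⟨fun a b c ↦ (closed_form a b c).trans ?_, (closed_form 1 1 1).trans ?_⟩
  · rw [mul_add_one, Nat.factorial_succ (a + b + c), Nat.factorial_succ (2 * (a + b + c) + 1),
      mul_add, mul_add]
    push_cast
    field_simp
    ring
  · simp only [Nat.factorial]
    push_cast
    ring
end

section
/- The 14-point fully symmetric rule with weight 4π/15 at each of the six points (±1, 0, 0), (0, ±1, 0), (0, 0, ±1), and weight 3π/10 at each of the eight points (±1/√3, ±1/√3, ±1/√3), is a cubature rule of degree 5 for U₃: for every polynomial p in three variables of total degree at most 5, ∫_{U₃} p dσ equals the corresponding weighted sum of the values of p at these 14 points. -/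
open MeasureTheory MvPolynomial

/-! An even exponent of degree at most 5 is `0`, `2eᵢ` or `2eᵢ + 2eⱼ`; every other monomial of that
degree is odd in some coordinate, and the reflection in it makes both the integral and the weighted
sum over the nodes vanish. The remaining moments of the surface measure are forced by two facts:
`∑ vᵢ² = 1`, and, by rotation invariance, `∫ ⟪u, v⟫⁴` depends only on `‖u‖`, which taken at
`u = eᵢ ± eⱼ` and `u = √2 eᵢ` gives `∫ vᵢ⁴ = 3 ∫ vᵢ²vⱼ²`. The nodes, the vertices of a
cross-polytope and of a cube, can be weighted so as to share these moments in every dimension. -/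

open scoped RealInnerProductSpace Pointwise

section SphereIsometry

variable {E F : Type*} [NormedAddCommGroup E] [NormedSpace ℝ E] [MeasurableSpace E] [BorelSpace E]
  [NormedAddCommGroup F] [NormedSpace ℝ F] [MeasurableSpace F] [BorelSpace F]

theorem map_toSphere_linearIsometryEquiv {μ : Measure E} {ν : Measure F} (g : E ≃ₗᵢ[ℝ] F)
    (hg : MeasurePreserving g μ ν) :
    μ.toSphere.map (fun v : Metric.sphere (0 : E) 1 => g v) =
      ν.toSphere.map ((↑) : Metric.sphere (0 : F) 1 → F) := by
  ext s hs
  have image_preimage : (Subtype.val '' ((fun v : Metric.sphere (0 : E) 1 => g v) ⁻¹' s) : Set E) =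
      g ⁻¹' (Subtype.val '' ((↑) ⁻¹' s : Set (Metric.sphere (0 : F) 1))) := by
    ext x
    simp [and_comm]
  have cone_preimage (t : Set F) :
      Set.Ioo (0 : ℝ) 1 • g ⁻¹' t = g ⁻¹' (Set.Ioo (0 : ℝ) 1 • t) := by
    ext x
    simp only [Set.mem_smul, Set.mem_preimage]
    constructor
    · rintro ⟨r, hr, y, hy, rfl⟩
      exact ⟨r, hr, g y, hy, (map_smul g r y).symm⟩
    · rintro ⟨r, hr, y, hy, hx⟩
      exact ⟨r, hr, g.symm y, by simpa using hy, by
        rw [← map_smul, hx, g.symm_apply_apply]⟩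
  have measurable_g : Measurable fun v : Metric.sphere (0 : E) 1 => g v := by fun_prop
  rw [Measure.map_apply measurable_g hs, Measure.map_apply measurable_subtype_coe hs,
    μ.toSphere_apply' (measurable_g hs), ν.toSphere_apply' (measurable_subtype_coe hs),
    image_preimage, cone_preimage, hg.measure_preimage_emb g.toHomeomorph.measurableEmbedding,
    g.toLinearEquiv.finrank_eq]

theorem integral_toSphere_comp_linearIsometryEquiv {G : Type*} [NormedAddCommGroup G]
    [NormedSpace ℝ G] {μ : Measure E} {ν : Measure F} (g : E ≃ₗᵢ[ℝ] F)
    (hg : MeasurePreserving g μ ν) (f : F → G) :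
    ∫ v : Metric.sphere (0 : E) 1, f (g v) ∂μ.toSphere =
      ∫ v : Metric.sphere (0 : F) 1, f v ∂ν.toSphere := by
  have embedding_E : MeasurableEmbedding ((↑) : Metric.sphere (0 : E) 1 → E) :=
    .subtype_coe Metric.isClosed_sphere.measurableSet
  have embedding_F : MeasurableEmbedding ((↑) : Metric.sphere (0 : F) 1 → F) :=
    .subtype_coe Metric.isClosed_sphere.measurableSet
  rw [← embedding_F.integral_map, ← map_toSphere_linearIsometryEquiv g hg]
  exact ((g.toHomeomorph.measurableEmbedding.comp embedding_E).integral_map f).symm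

end SphereIsometry

theorem integrable_toSphere_of_continuous {E G : Type*} [NormedAddCommGroup E] [NormedSpace ℝ E]
    [FiniteDimensional ℝ E] [MeasurableSpace E] [BorelSpace E] [NormedAddCommGroup G]
    (μ : Measure E) [μ.IsAddHaarMeasure] {f : Metric.sphere (0 : E) 1 → G} (hf : Continuous f) :
    Integrable f μ.toSphere :=
  hf.integrable_of_hasCompactSupport (.of_compactSpace f)

theorem integral_toSphere_comp_inner_eq_of_norm_eq {E G : Type*} [NormedAddCommGroup E]
    [InnerProductSpace ℝ E] [FiniteDimensional ℝ E] [MeasurableSpace E] [BorelSpace E]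
    [NormedAddCommGroup G] [NormedSpace ℝ G] {u w : E} (h : ‖u‖ = ‖w‖) (f : ℝ → G) :
    ∫ v : Metric.sphere (0 : E) 1, f ⟪u, v⟫ ∂volume.toSphere =
      ∫ v : Metric.sphere (0 : E) 1, f ⟪w, v⟫ ∂volume.toSphere := by
  let g := (ℝ ∙ (u - w))ᗮ.reflection
  have hg : g u = w := Submodule.reflection_sub h
  rw [← integral_toSphere_comp_linearIsometryEquiv g g.measurePreserving (fun x => f ⟪w, x⟫), ← hg]
  simp only [g.inner_map_map]

section SphereMoments

variable {ι : Type*} [Fintype ι]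

local notation "𝕊" => Metric.sphere (0 : EuclideanSpace ℝ ι) 1

theorem sum_sq_coord_eq_one_of_mem_sphere (v : 𝕊) : ∑ i, v.1 i ^ 2 = 1 := by
  rw [← EuclideanSpace.real_norm_sq_eq, norm_eq_of_mem_sphere, one_pow]

theorem integral_toSphere_comp_coord_eq {G : Type*} [NormedAddCommGroup G] [NormedSpace ℝ G]
    (i j : ι) (f : ℝ → G) :
    ∫ v : 𝕊, f (v.1 i) ∂volume.toSphere = ∫ v : 𝕊, f (v.1 j) ∂volume.toSphere := by
  classical
  simpa [EuclideanSpace.inner_single_left] using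
    integral_toSphere_comp_inner_eq_of_norm_eq (u := EuclideanSpace.single i (1 : ℝ))
      (w := EuclideanSpace.single j 1) (by simp) f

theorem card_mul_integral_toSphere_coord_sq (i : ι) :
    Fintype.card ι * ∫ v : 𝕊, v.1 i ^ 2 ∂volume.toSphere =
      (volume : Measure (EuclideanSpace ℝ ι)).toSphere.real Set.univ :=
  calc
    _ = ∑ j, ∫ v : 𝕊, v.1 j ^ 2 ∂volume.toSphere := by
      simp only [integral_toSphere_comp_coord_eq _ i (· ^ 2), Finset.sum_const, Finset.card_univ,
        nsmul_eq_mul]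
    _ = ∫ v : 𝕊, ∑ j, v.1 j ^ 2 ∂volume.toSphere :=
      (integral_finsetSum _ fun j _ => integrable_toSphere_of_continuous _ (by fun_prop)).symm
    _ = _ := by
      simp only [sum_sq_coord_eq_one_of_mem_sphere, integral_const, smul_eq_mul, mul_one]

/- `eᵢ ± eⱼ` are rotations of `√2 eᵢ`, and `(x + y)⁴ + (x - y)⁴ = 2x⁴ + 12x²y² + 2y⁴`. -/
theorem integral_toSphere_coord_pow_four {i j : ι} (hij : i ≠ j) :
    ∫ v : 𝕊, v.1 i ^ 4 ∂volume.toSphere =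
      3 * ∫ v : 𝕊, v.1 i ^ 2 * v.1 j ^ 2 ∂volume.toSphere := by
  classical
  have integrable {f : 𝕊 → ℝ} (hf : Continuous f) : Integrable f volume.toSphere :=
    integrable_toSphere_of_continuous _ hf
  have diagonal (c : ℝ) (hc : c ^ 2 = 1) :
      ∫ v : 𝕊, (v.1 i + c * v.1 j) ^ 4 ∂volume.toSphere =
        4 * ∫ v : 𝕊, v.1 i ^ 4 ∂volume.toSphere := by
    have norm_eq : ‖EuclideanSpace.single i 1 + EuclideanSpace.single j c‖ =
        ‖EuclideanSpace.single i √2‖ := by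
      rw [← sq_eq_sq₀ (norm_nonneg _) (norm_nonneg _), norm_add_sq_real]
      simp [EuclideanSpace.inner_single_left, hij, hc, one_add_one_eq_two]
    have h := integral_toSphere_comp_inner_eq_of_norm_eq norm_eq (· ^ 4)
    simp only [inner_add_left, EuclideanSpace.inner_single_left, conj_trivial, one_mul, mul_pow,
      integral_const_mul] at h
    rw [h, show √2 ^ 4 = (√2 ^ 2) ^ 2 by ring, Real.sq_sqrt zero_le_two]
    norm_num
  have expand :
      ∫ v : 𝕊, (v.1 i + 1 * v.1 j) ^ 4 ∂volume.toSphere +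
        ∫ v : 𝕊, (v.1 i + (-1) * v.1 j) ^ 4 ∂volume.toSphere =
      2 * ∫ v : 𝕊, v.1 i ^ 4 ∂volume.toSphere + 2 * ∫ v : 𝕊, v.1 j ^ 4 ∂volume.toSphere +
        12 * ∫ v : 𝕊, v.1 i ^ 2 * v.1 j ^ 2 ∂volume.toSphere := by
    simp only [← integral_const_mul]
    rw [← integral_add, ← integral_add, ← integral_add]
    · congr with v
      ring
    all_goals exact integrable (by fun_prop)
  rw [diagonal 1 (by norm_num), diagonal (-1) (by norm_num),
    integral_toSphere_comp_coord_eq j i (· ^ 4)] at expand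
  linarith

theorem card_add_two_mul_integral_toSphere_coord_pow_four (i : ι) :
    (Fintype.card ι + 2) * ∫ v : 𝕊, v.1 i ^ 4 ∂volume.toSphere =
      3 * ∫ v : 𝕊, v.1 i ^ 2 ∂volume.toSphere := by
  classical
  have mixed (j : ι) : 3 * ∫ v : 𝕊, v.1 i ^ 2 * v.1 j ^ 2 ∂volume.toSphere =
      (1 + if j = i then 2 else 0) * ∫ v : 𝕊, v.1 i ^ 4 ∂volume.toSphere := by
    split_ifs with h
    · subst h
      simp only [← pow_add]
      norm_num
    · rw [← integral_toSphere_coord_pow_four (Ne.symm h), add_zero, one_mul]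
  symm
  calc
    _ = 3 * ∫ v : 𝕊, ∑ j, v.1 i ^ 2 * v.1 j ^ 2 ∂volume.toSphere := by
      simp only [← Finset.mul_sum, sum_sq_coord_eq_one_of_mem_sphere, mul_one]
    _ = ∑ j, 3 * ∫ v : 𝕊, v.1 i ^ 2 * v.1 j ^ 2 ∂volume.toSphere := by
      rw [integral_finsetSum _ fun j _ => integrable_toSphere_of_continuous _ (by fun_prop),
        Finset.mul_sum]
    _ = _ := by
      simp [mixed, ← Finset.sum_mul, Finset.sum_add_distrib]

theorem integral_toSphere_coord_sq_mul_coord_sq [DecidableEq ι] (i j : ι) :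
    ∫ v : 𝕊, v.1 i ^ 2 * v.1 j ^ 2 ∂volume.toSphere =
      (volume : Measure (EuclideanSpace ℝ ι)).toSphere.real Set.univ *
        ((if i = j then 3 else 1) / (Fintype.card ι * (Fintype.card ι + 2))) := by
  have card_pos : (0 : ℝ) < Fintype.card ι := by
    exact_mod_cast Fintype.card_pos_iff.2 ⟨i⟩
  rw [← card_mul_integral_toSphere_coord_sq i]
  have quartic := card_add_two_mul_integral_toSphere_coord_pow_four i
  split_ifs with h
  · subst h
    simp only [← pow_add]
    field_simp
    linarith
  · rw [integral_toSphere_coord_pow_four h] at quartic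
    field_simp
    linarith

end SphereMoments

theorem eval_update_neg_monomial {ι R : Type*} [DecidableEq ι] [CommRing R] {d : ι →₀ ℕ} {k : ι}
    (hk : Odd (d k)) (x : ι → R) (c : R) :
    eval (Function.update x k (-x k)) (monomial d c) = -eval x (monomial d c) := by
  have hmem : k ∈ d.support := Finsupp.mem_support_iff.2 hk.pos.ne'
  simp only [eval_monomial, Finsupp.prod, ← Finset.mul_prod_erase _ _ hmem]
  rw [Function.update_self, hk.neg_pow, Finset.prod_congr rfl fun i hi => by
    rw [Function.update_of_ne (Finset.ne_of_mem_erase hi)]]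
  ring

theorem eq_zero_or_single_or_add_single_of_degree_le_two {σ : Type*} {e : σ →₀ ℕ}
    (he : e.degree ≤ 2) :
    e = 0 ∨ (∃ i, e = .single i 1) ∨ ∃ i j, e = .single i 1 + .single j 1 := by
  have mem (n : ℕ) (hn : e.degree = n) : e ∈ n • (Finsupp.single · 1) '' (Set.univ : Set σ) := by
    rw [Finsupp.nsmul_single_one_image]
    exact ⟨hn, Set.subset_univ _⟩
  have h : e.degree = 0 ∨ e.degree = 1 ∨ e.degree = 2 := by omega
  rcases h with h | h | h
  · exact .inl ((Finsupp.degree_eq_zero_iff e).1 h)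
  · have := mem 1 h
    rw [one_nsmul] at this
    obtain ⟨i, -, rfl⟩ := this
    exact .inr (.inl ⟨i, rfl⟩)
  · have := mem 2 h
    rw [two_nsmul] at this
    obtain ⟨_, ⟨i, -, rfl⟩, _, ⟨j, -, rfl⟩, rfl⟩ := this
    exact .inr (.inr ⟨i, j, rfl⟩)

section LinearFunctionals

variable {σ R M : Type*} [CommSemiring R] [AddCommMonoid M] [Module R M]

theorem linearMap_apply_eq_of_totalDegree_le {L L' : MvPolynomial σ R →ₗ[R] M} {n : ℕ}
    (h : ∀ d : σ →₀ ℕ, d.degree ≤ n → L (monomial d 1) = L' (monomial d 1))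
    {p : MvPolynomial σ R} (hp : p.totalDegree ≤ n) : L p = L' p := by
  rw [← mem_restrictTotalDegree, restrictTotalDegree, restrictSupport_eq_span] at hp
  refine LinearMap.eqOn_span ?_ hp
  rintro _ ⟨d, hd, rfl⟩
  exact h d hd

theorem linearMap_apply_eq_of_totalDegree_le_five {L L' : MvPolynomial σ R →ₗ[R] M}
    (odd : ∀ (d : σ →₀ ℕ) (k : σ), Odd (d k) → L (monomial d 1) = L' (monomial d 1))
    (one : L 1 = L' 1) (sq : ∀ i, L (X i ^ 2) = L' (X i ^ 2))
    (sq_mul_sq : ∀ i j, L (X i ^ 2 * X j ^ 2) = L' (X i ^ 2 * X j ^ 2))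
    {p : MvPolynomial σ R} (hp : p.totalDegree ≤ 5) : L p = L' p := by
  refine linearMap_apply_eq_of_totalDegree_le (fun d hd => ?_) hp
  by_cases hodd : ∃ k, Odd (d k)
  · obtain ⟨k, hk⟩ := hodd
    exact odd d k hk
  obtain ⟨e, rfl⟩ : ∃ e, d = 2 • e := by
    simp only [not_exists, Nat.not_odd_iff_even] at hodd
    refine ⟨d.mapRange (· / 2) rfl, Finsupp.ext fun k => ?_⟩
    simpa using (Nat.two_mul_div_two_of_even (hodd k)).symm
  rw [map_nsmul, smul_eq_mul] at hd
  obtain rfl | ⟨i, rfl⟩ | ⟨i, j, rfl⟩ :=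
    eq_zero_or_single_or_add_single_of_degree_le_two (e := e) (by omega)
  · simpa using one
  · simpa [X_pow_eq_monomial] using sq i
  · simpa [X_pow_eq_monomial, monomial_mul] using sq_mul_sq i j

end LinearFunctionals

section CubatureRule

variable (ι : Type*) [Fintype ι]

/-- The linear functional `p ↦ ∫ p dσ` on polynomial functions, where `σ` is the (unnormalized)
surface measure of the unit sphere of `ℝ^ι`. -/
noncomputable def sphereIntegral : MvPolynomial ι ℝ →ₗ[ℝ] ℝ where
  toFun p := ∫ v : Metric.sphere (0 : EuclideanSpace ℝ ι) 1, eval v.1.ofLp p ∂volume.toSphere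
  map_add' p q := by
    have integrable (r : MvPolynomial ι ℝ) : Integrable
        (fun v : Metric.sphere (0 : EuclideanSpace ℝ ι) 1 => eval v.1.ofLp r) volume.toSphere :=
      integrable_toSphere_of_continuous _ ((continuous_eval r).comp (by fun_prop))
    simp only [map_add]
    exact integral_add (integrable p) (integrable q)
  map_smul' c p := by
    simp only [smul_eval, integral_const_mul, RingHom.id_apply, smul_eq_mul]

/-- The sum of the values of a polynomial at the `2 |ι|` vertices `±eₖ` of the cross-polytope. -/
noncomputable def crossPolytopeSum [DecidableEq ι] : MvPolynomial ι ℝ →ₗ[ℝ] ℝ where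
  toFun p := ∑ k, (eval (Pi.single k 1) p + eval (Pi.single k (-1)) p)
  map_add' p q := by
    simp only [map_add, add_add_add_comm, Finset.sum_add_distrib]
  map_smul' c p := by
    simp only [smul_eval, ← mul_add, ← Finset.mul_sum, RingHom.id_apply, smul_eq_mul]

/-- The sum of the values of a polynomial at the `2 ^ |ι|` vertices `(±1/√|ι|, …, ±1/√|ι|)` of the
cube inscribed in the unit sphere; the choice of signs is encoded by `s : ι → ℤˣ`. -/
noncomputable def inscribedCubeSum [DecidableEq ι] : MvPolynomial ι ℝ →ₗ[ℝ] ℝ where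
  toFun p := ∑ s : ι → ℤˣ, eval (fun i => ((s i : ℤ) : ℝ) / √(Fintype.card ι)) p
  map_add' p q := by
    simp only [map_add, Finset.sum_add_distrib]
  map_smul' c p := by
    simp only [smul_eval, ← Finset.mul_sum, RingHom.id_apply, smul_eq_mul]

/-- The fully symmetric cubature rule of total weight `1` whose nodes are the vertices of the
cross-polytope and of the inscribed cube. The two weights are determined by exactness at
`x i ^ 4` and `x i ^ 2 * x j ^ 2`. -/
noncomputable def crossPolytopeCubeRule [DecidableEq ι] : MvPolynomial ι ℝ →ₗ[ℝ] ℝ :=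
  (1 / (Fintype.card ι * (Fintype.card ι + 2) : ℝ)) • crossPolytopeSum ι +
    (Fintype.card ι / ((Fintype.card ι + 2) * 2 ^ Fintype.card ι) : ℝ) • inscribedCubeSum ι

variable {ι}

theorem sphereIntegral_monomial_of_odd {d : ι →₀ ℕ} {k : ι} (hk : Odd (d k)) (c : ℝ) :
    sphereIntegral ι (monomial d c) = 0 := by
  classical
  let flip : EuclideanSpace ℝ ι ≃ₗᵢ[ℝ] EuclideanSpace ℝ ι :=
    LinearIsometryEquiv.piLpCongrRight 2 fun i =>
      if i = k then LinearIsometryEquiv.neg ℝ else LinearIsometryEquiv.refl ℝ ℝ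
  have flip_apply (x : EuclideanSpace ℝ ι) :
      (flip x).ofLp = Function.update x.ofLp k (-x k) := by
    ext i
    by_cases h : i = k <;> simp [flip, h]
  have h := integral_toSphere_comp_linearIsometryEquiv flip flip.measurePreserving
    fun x => eval x.ofLp (monomial d c)
  simp only [flip_apply, eval_update_neg_monomial hk, integral_neg] at h
  exact neg_eq_self.1 h

variable [DecidableEq ι]

theorem crossPolytopeSum_monomial_of_odd {d : ι →₀ ℕ} {k : ι} (hk : Odd (d k)) (c : ℝ) :
    crossPolytopeSum ι (monomial d c) = 0 := by
  refine Finset.sum_eq_zero fun j _ => ?_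
  have flip_node (a : ℝ) := eval_update_neg_monomial hk (Pi.single j a) c
  obtain rfl | h := eq_or_ne j k
  · simpa [Pi.single, add_eq_zero_iff_eq_neg'] using flip_node 1
  · have vanish (a : ℝ) : eval (Pi.single j a) (monomial d c) = 0 := by
      have fixed : Function.update (Pi.single j a : ι → ℝ) k
          (-(Pi.single j a : ι → ℝ) k) = Pi.single j a := by
        simp [h.symm]
      have flip_fixed := flip_node a
      rw [fixed] at flip_fixed
      exact self_eq_neg.1 flip_fixed
    rw [vanish, vanish, add_zero]

theorem inscribedCubeSum_monomial_of_odd {d : ι →₀ ℕ} {k : ι} (hk : Odd (d k)) (c : ℝ) :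
    inscribedCubeSum ι (monomial d c) = 0 := by
  let node (s : ι → ℤˣ) (i : ι) : ℝ := (s i : ℤ) / √(Fintype.card ι)
  have flip_involutive :
      Function.Involutive fun s : ι → ℤˣ => Function.update s k (-s k) := fun s => by simp
  have flip_node (s : ι → ℤˣ) :
      node (Function.update s k (-s k)) = Function.update (node s) k (-node s k) := by
    ext i
    obtain rfl | h := eq_or_ne i k
    · simp [node, neg_div]
    · simp [node, h]
  have h := Equiv.sum_comp flip_involutive.toPerm fun s => eval (node s) (monomial d c)
  simp only [Function.Involutive.coe_toPerm, flip_node, eval_update_neg_monomial hk,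
    Finset.sum_neg_distrib] at h
  exact neg_eq_self.1 h

theorem crossPolytopeSum_one : crossPolytopeSum ι 1 = 2 * Fintype.card ι := by
  simp [crossPolytopeSum, one_add_one_eq_two, mul_comm]

theorem crossPolytopeSum_X_sq (i : ι) : crossPolytopeSum ι (X i ^ 2) = 2 := by
  simp [crossPolytopeSum, Pi.single_apply, Finset.sum_add_distrib, one_add_one_eq_two]

theorem crossPolytopeSum_X_sq_mul_X_sq (i j : ι) :
    crossPolytopeSum ι (X i ^ 2 * X j ^ 2) = if i = j then 2 else 0 := by
  have vertex_pair (k : ι) : eval (Pi.single k (1 : ℝ)) (X i ^ 2 * X j ^ 2) +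
      eval (Pi.single k (-1)) (X i ^ 2 * X j ^ 2) =
        if i = k then (if i = j then 2 else 0) else 0 := by
    simp only [map_mul, map_pow, eval_X, Pi.single_apply]
    grind
  simp only [crossPolytopeSum, LinearMap.coe_mk, AddHom.coe_mk, vertex_pair, Finset.sum_ite_eq,
    Finset.mem_univ, if_true]

theorem sq_sign_div_sqrt (s : ℤˣ) {a : ℝ} (ha : 0 ≤ a) : (((s : ℤ) : ℝ) / √a) ^ 2 = 1 / a := by
  rw [div_pow, Real.sq_sqrt ha]
  exact_mod_cast congrArg (fun t : ℤˣ => ((t : ℤ) : ℝ) / a) (Int.units_sq s)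

theorem inscribedCubeSum_one : inscribedCubeSum ι 1 = 2 ^ Fintype.card ι := by
  simp [inscribedCubeSum]

theorem inscribedCubeSum_X_sq (i : ι) :
    inscribedCubeSum ι (X i ^ 2) = 2 ^ Fintype.card ι / Fintype.card ι := by
  simp only [inscribedCubeSum, LinearMap.coe_mk, AddHom.coe_mk, map_pow, eval_X,
    sq_sign_div_sqrt _ (Nat.cast_nonneg _), Finset.sum_const, Finset.card_univ, Fintype.card_fun,
    Fintype.card_units_int, nsmul_eq_mul, Nat.cast_pow, Nat.cast_ofNat, mul_one_div]

theorem inscribedCubeSum_X_sq_mul_X_sq (i j : ι) :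
    inscribedCubeSum ι (X i ^ 2 * X j ^ 2) = 2 ^ Fintype.card ι / Fintype.card ι ^ 2 := by
  simp only [inscribedCubeSum, LinearMap.coe_mk, AddHom.coe_mk, map_mul, map_pow, eval_X,
    sq_sign_div_sqrt _ (Nat.cast_nonneg _), ← pow_two, one_div_pow, Finset.sum_const,
    Finset.card_univ, Fintype.card_fun, Fintype.card_units_int, nsmul_eq_mul, Nat.cast_pow,
    Nat.cast_ofNat, mul_one_div]

theorem crossPolytopeCubeRule_monomial_of_odd {d : ι →₀ ℕ} {k : ι} (hk : Odd (d k)) (c : ℝ) :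
    crossPolytopeCubeRule ι (monomial d c) = 0 := by
  simp only [crossPolytopeCubeRule, LinearMap.add_apply, LinearMap.smul_apply,
    crossPolytopeSum_monomial_of_odd hk, inscribedCubeSum_monomial_of_odd hk, smul_zero, add_zero]

theorem crossPolytopeCubeRule_one [Nonempty ι] : crossPolytopeCubeRule ι 1 = 1 := by
  simp only [crossPolytopeCubeRule, LinearMap.add_apply, LinearMap.smul_apply, smul_eq_mul,
    crossPolytopeSum_one, inscribedCubeSum_one]
  field_simp
  ring

theorem crossPolytopeCubeRule_X_sq (i : ι) :
    crossPolytopeCubeRule ι (X i ^ 2) = 1 / Fintype.card ι := by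
  have : Nonempty ι := ⟨i⟩
  simp only [crossPolytopeCubeRule, LinearMap.add_apply, LinearMap.smul_apply, smul_eq_mul,
    crossPolytopeSum_X_sq, inscribedCubeSum_X_sq]
  field_simp
  ring

theorem crossPolytopeCubeRule_X_sq_mul_X_sq (i j : ι) :
    crossPolytopeCubeRule ι (X i ^ 2 * X j ^ 2) =
      (if i = j then 3 else 1) / (Fintype.card ι * (Fintype.card ι + 2)) := by
  have : Nonempty ι := ⟨i⟩
  simp only [crossPolytopeCubeRule, LinearMap.add_apply, LinearMap.smul_apply, smul_eq_mul,
    crossPolytopeSum_X_sq_mul_X_sq, inscribedCubeSum_X_sq_mul_X_sq]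
  split_ifs <;> field_simp
  all_goals ring

theorem degree5_rule_14pt_general [Nonempty ι] (p : MvPolynomial ι ℝ) (hp : p.totalDegree ≤ 5) :
    ∫ v : Metric.sphere (0 : EuclideanSpace ℝ ι) 1, eval v.1.ofLp p ∂volume.toSphere =
      (volume : Measure (EuclideanSpace ℝ ι)).toSphere.real Set.univ *
        crossPolytopeCubeRule ι p := by
  set area := (volume : Measure (EuclideanSpace ℝ ι)).toSphere.real Set.univ with area_def
  suffices sphereIntegral ι p = (area • crossPolytopeCubeRule ι) p from this
  refine linearMap_apply_eq_of_totalDegree_le_five (fun d k hk => ?_) ?_ (fun i => ?_)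
    (fun i j => ?_) hp
  · rw [LinearMap.smul_apply, sphereIntegral_monomial_of_odd hk,
      crossPolytopeCubeRule_monomial_of_odd hk, smul_zero]
  · simp [sphereIntegral, crossPolytopeCubeRule_one, area]
  · rw [LinearMap.smul_apply, crossPolytopeCubeRule_X_sq, smul_eq_mul, mul_one_div,
      eq_div_iff (by simp), area_def, ← card_mul_integral_toSphere_coord_sq i]
    simp [sphereIntegral, mul_comm]
  · rw [LinearMap.smul_apply, crossPolytopeCubeRule_X_sq_mul_X_sq, smul_eq_mul, area_def,
      ← integral_toSphere_coord_sq_mul_coord_sq]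
    simp [sphereIntegral]

end CubatureRule

section ThreeDimensional

theorem sum_fin_succ_pi {α M : Type*} [Fintype α] [AddCommMonoid M] {n : ℕ}
    (f : (Fin (n + 1) → α) → M) :
    ∑ s, f s = ∑ a, ∑ s : Fin n → α, f (Matrix.vecCons a s) := by
  rw [← (Fin.consEquiv fun _ => α).sum_comp, Fintype.sum_prod_type]
  rfl

theorem crossPolytopeSum_fin_three (p : MvPolynomial (Fin 3) ℝ) :
    crossPolytopeSum (Fin 3) p =
      eval ![1, 0, 0] p + eval ![-1, 0, 0] p + eval ![0, 1, 0] p + eval ![0, -1, 0] p +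
        eval ![0, 0, 1] p + eval ![0, 0, -1] p := by
  have axis_zero (a : ℝ) : (Pi.single 0 a : Fin 3 → ℝ) = ![a, 0, 0] := by
    ext i; fin_cases i <;> rfl
  have axis_one (a : ℝ) : (Pi.single 1 a : Fin 3 → ℝ) = ![0, a, 0] := by
    ext i; fin_cases i <;> rfl
  have axis_two (a : ℝ) : (Pi.single 2 a : Fin 3 → ℝ) = ![0, 0, a] := by
    ext i; fin_cases i <;> rfl
  simp only [crossPolytopeSum, LinearMap.coe_mk, AddHom.coe_mk, Fin.sum_univ_three, axis_zero,
    axis_one, axis_two, add_assoc]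

theorem inscribedCubeSum_fin_three (p : MvPolynomial (Fin 3) ℝ) {ε : ℝ} (hε : ε = 1 / √3) :
    inscribedCubeSum (Fin 3) p =
      eval ![ε, ε, ε] p + eval ![ε, ε, -ε] p + eval ![ε, -ε, ε] p + eval ![ε, -ε, -ε] p +
        eval ![-ε, ε, ε] p + eval ![-ε, ε, -ε] p + eval ![-ε, -ε, ε] p +
        eval ![-ε, -ε, -ε] p := by
  have node (a b c : ℤˣ) (s : Fin 0 → ℤˣ) :
      (fun i => (((Matrix.vecCons a (Matrix.vecCons b (Matrix.vecCons c s)) i : ℤˣ) : ℤ) : ℝ) /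
        √(Fintype.card (Fin 3))) = ![(a : ℤ) * ε, (b : ℤ) * ε, (c : ℤ) * ε] := by
    ext i; fin_cases i <;> simp [hε, div_eq_mul_inv]
  simp only [inscribedCubeSum, LinearMap.coe_mk, AddHom.coe_mk, sum_fin_succ_pi, node]
  simp [UnitsInt.univ, add_assoc]

theorem crossPolytopeCubeRule_fin_three (p : MvPolynomial (Fin 3) ℝ) :
    crossPolytopeCubeRule (Fin 3) p =
      1 / 15 * crossPolytopeSum (Fin 3) p + 3 / 40 * inscribedCubeSum (Fin 3) p := by
  simp only [crossPolytopeCubeRule, LinearMap.add_apply, LinearMap.smul_apply, smul_eq_mul,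
    Fintype.card_fin]
  norm_num

theorem toSphere_real_univ_fin_three :
    (volume : Measure (EuclideanSpace ℝ (Fin 3))).toSphere.real Set.univ = 4 * Real.pi := by
  rw [Measure.toSphere_real_apply_univ, Measure.real, EuclideanSpace.volume_ball_fin_three,
    ENNReal.ofReal_one, one_pow, one_mul, ENNReal.toReal_ofReal (by positivity),
    finrank_euclideanSpace_fin]
  ring

end ThreeDimensional

/-- The 14-point fully symmetric rule with weight `4π/15` at each of the six
points `(±1,0,0), (0,±1,0), (0,0,±1)` and weight `3π/10` at each of the eight points
`(±1/√3, ±1/√3, ±1/√3)` is a cubature rule of degree 5 for `U₃`. -/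
theorem degree5_rule_14pt (ε : ℝ) (hε : ε = 1 / Real.sqrt 3)
    (p : MvPolynomial (Fin 3) ℝ) (hp : p.totalDegree ≤ 5) :
    ∫ v : Metric.sphere (0 : EuclideanSpace ℝ (Fin 3)) 1,
        eval (fun i => (v : EuclideanSpace ℝ (Fin 3)) i) p
      ∂((volume : Measure (EuclideanSpace ℝ (Fin 3))).toSphere) =
      (4 * Real.pi / 15) *
        (eval ![1, 0, 0] p +
          eval ![-1, 0, 0] p +
          eval ![0, 1, 0] p +
          eval ![0, -1, 0] p +
          eval ![0, 0, 1] p +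
          eval ![0, 0, -1] p) +
      (3 * Real.pi / 10) *
        (eval ![ε, ε, ε] p +
          eval ![ε, ε, -ε] p +
          eval ![ε, -ε, ε] p +
          eval ![ε, -ε, -ε] p +
          eval ![-ε, ε, ε] p +
          eval ![-ε, ε, -ε] p +
          eval ![-ε, -ε, ε] p +
          eval ![-ε, -ε, -ε] p) := by
  refine (degree5_rule_14pt_general p hp).trans ?_
  rw [toSphere_real_univ_fin_three, crossPolytopeCubeRule_fin_three, crossPolytopeSum_fin_three,
    inscribedCubeSum_fin_three p hε]
  ring
end

section
/- Let γ = √((1 − 1/√3)/2) and δ = √((1 + 1/√3)/2). The 38-point fully symmetric rule with weight 4π/105 at each of the six points (±1, 0, 0), (0, ±1, 0), (0, 0, ±1); weight 4π/35 at each of the twenty-four points whose coordinates are a permutation of (±γ, ±δ, 0); and weight 9π/70 at each of the eight points (±1/√3, ±1/√3, ±1/√3), is a cubature rule of degree 9 for U₃: for every polynomial p in three variables of total degree at most 9, ∫_{U₃} p dσ equals the corresponding weighted sum of the values of p at these 38 points. -/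
open MeasureTheory MvPolynomial

/-! Both sides of the identity are *fully symmetric* functionals: invariant under the signed
permutations of the coordinates, and unchanged when the polynomial is multiplied by
`x² + y² + z²`, because they live on the unit sphere. By Sobolev's principle only polynomials
invariant under the symmetry group have to be tested. Modulo `x² + y² + z² = 1` those of degree at
most `9` are spanned by `1`, `e₂`, `e₃`, `e₂²`, where `e₂`, `e₃` are elementary symmetric in
`x², y², z²`, so it suffices to compare the moments of `1`, `x²y²`, `x²y²z²` and `x⁴y⁴`. The
moments of the sphere come from integrating `x^a exp(-‖x‖²)` over space, once as a product of
one-dimensional integrals and once in polar coordinates. -/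

namespace SphereCubature

open Equiv (Perm)
open Module (Dual finrank)
open scoped Nat

lemma integral_mul_fun_norm_eq_integral_toSphere_mul {E : Type*} [NormedAddCommGroup E]
    [NormedSpace ℝ E] [FiniteDimensional ℝ E] [Nontrivial E] [MeasurableSpace E] [BorelSpace E]
    (μ : Measure E) [μ.IsAddHaarMeasure] {f : E → ℝ} {k : ℕ}
    (hf : ∀ r : ℝ, 0 < r → ∀ x, f (r • x) = r ^ k * f x) (g : ℝ → ℝ) :
    ∫ x, f x * g ‖x‖ ∂μ = (∫ v : Metric.sphere (0 : E) 1, f v ∂μ.toSphere) *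
      ∫ r in Set.Ioi (0 : ℝ), r ^ (finrank ℝ E - 1 + k) * g r :=
  calc
    ∫ x, f x * g ‖x‖ ∂μ
      = ∫ x : ({0}ᶜ : Set E), f x * g ‖(x : E)‖ ∂μ.comap (↑) := by
        rw [integral_subtype_comap (measurableSet_singleton _).compl fun x ↦ f x * g ‖x‖,
          restrict_compl_singleton]
    _ = ∫ x, f x.1 * ((x.2 : ℝ) ^ k * g x.2)
          ∂μ.toSphere.prod (.volumeIoiPow (finrank ℝ E - 1)) := by
        rw [← μ.measurePreserving_homeomorphUnitSphereProd.integral_comp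
          (Homeomorph.measurableEmbedding _)]
        refine integral_congr_ae (.of_forall fun x ↦ ?_)
        have hx : 0 < ‖(x : E)‖ := norm_pos_iff.2 x.2
        have hfx : f x = ‖(x : E)‖ ^ k * f (‖(x : E)‖⁻¹ • (x : E)) := by
          rw [← hf _ hx, smul_inv_smul₀ hx.ne']
        simp only [hfx, homeomorphUnitSphereProd_apply_fst_coe,
          homeomorphUnitSphereProd_apply_snd_coe]
        ring
    _ = (∫ v : Metric.sphere (0 : E) 1, f v ∂μ.toSphere) *
          ∫ r : Set.Ioi (0 : ℝ), (r : ℝ) ^ k * g r ∂.volumeIoiPow (finrank ℝ E - 1) :=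
        integral_prod_mul (fun v : Metric.sphere (0 : E) 1 ↦ f v)
          fun r : Set.Ioi (0 : ℝ) ↦ (r : ℝ) ^ k * g r
    _ = _ := by
        congr 1
        simp only [Measure.volumeIoiPow, ENNReal.ofReal]
        rw [integral_withDensity_eq_integral_smul
            (measurable_subtype_coe.pow_const _).real_toNNReal,
          integral_subtype_comap measurableSet_Ioi
            fun r : ℝ ↦ Real.toNNReal (r ^ (finrank ℝ E - 1)) • (r ^ k * g r)]
        refine setIntegral_congr_fun measurableSet_Ioi fun r hr ↦ ?_
        simp only [NNReal.smul_def, Real.coe_toNNReal _ (pow_nonneg (Set.mem_Ioi.1 hr).le _),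
          smul_eq_mul, pow_add, mul_assoc]

lemma integral_Ioi_pow_mul_exp_neg_sq (n : ℕ) :
    ∫ r in Set.Ioi (0 : ℝ), r ^ n * Real.exp (-r ^ 2) = Real.Gamma ((n + 1) / 2) / 2 := by
  have h := integral_rpow_mul_exp_neg_rpow (p := 2) (q := n) two_pos
    (neg_one_lt_zero.trans_le n.cast_nonneg)
  simp only [Real.rpow_natCast, Real.rpow_ofNat] at h
  rw [h]
  ring

lemma integral_even_pow_mul_exp_neg_sq (m : ℕ) :
    ∫ r : ℝ, r ^ (2 * m) * Real.exp (-r ^ 2) = Real.Gamma (m + 1 / 2) :=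
  calc
    ∫ r : ℝ, r ^ (2 * m) * Real.exp (-r ^ 2)
      = ∫ r : ℝ, |r| ^ (2 * m) * Real.exp (-|r| ^ 2) := by
        simp only [(even_two_mul m).pow_abs, sq_abs]
    _ = 2 * ∫ r in Set.Ioi (0 : ℝ), r ^ (2 * m) * Real.exp (-r ^ 2) :=
        integral_comp_abs (f := fun r ↦ r ^ (2 * m) * Real.exp (-r ^ 2))
    _ = Real.Gamma (m + 1 / 2) := by
        rw [integral_Ioi_pow_mul_exp_neg_sq, mul_div_cancel₀ _ two_ne_zero]
        push_cast
        ring_nf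

lemma integral_odd_pow_mul_exp_neg_sq {n : ℕ} (hn : Odd n) :
    ∫ r : ℝ, r ^ n * Real.exp (-r ^ 2) = 0 := by
  have h := integral_neg_eq_self (fun r : ℝ ↦ r ^ n * Real.exp (-r ^ 2)) volume
  simp only [hn.neg_pow, neg_sq, neg_mul, integral_neg] at h
  linarith

section SphereMoments

variable {ι : Type*} [Fintype ι]

lemma integral_prod_pow_mul_exp_neg_norm_sq (a : ι → ℕ) :
    ∫ x : EuclideanSpace ℝ ι, (∏ i, x i ^ a i) * Real.exp (-‖x‖ ^ 2) =
      ∏ i, ∫ r : ℝ, r ^ a i * Real.exp (-r ^ 2) := by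
  rw [← integral_fintype_prod_volume_eq_prod fun i (r : ℝ) ↦ r ^ a i * Real.exp (-r ^ 2),
    ← (PiLp.volume_preserving_toLp ι).integral_comp
      (MeasurableEquiv.toLp 2 _).measurableEmbedding]
  simp only [EuclideanSpace.norm_sq_eq, Real.norm_eq_abs, sq_abs, Finset.prod_mul_distrib,
    ← Real.exp_sum, Finset.sum_neg_distrib]

variable [Nonempty ι]

theorem integral_toSphere_prod_pow (a : ι → ℕ) :
    ∫ v : Metric.sphere (0 : EuclideanSpace ℝ ι) 1, ∏ i, (v : EuclideanSpace ℝ ι) i ^ a i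
        ∂(volume : Measure (EuclideanSpace ℝ ι)).toSphere =
      2 * (∏ i, ∫ r : ℝ, r ^ a i * Real.exp (-r ^ 2)) /
        Real.Gamma ((∑ i, a i + Fintype.card ι) / 2) := by
  have hhom (r : ℝ) (_ : 0 < r) (x : EuclideanSpace ℝ ι) :
      ∏ i, (r • x) i ^ a i = r ^ (∑ i, a i) * ∏ i, x i ^ a i := by
    simp only [PiLp.smul_apply, smul_eq_mul, mul_pow, Finset.prod_mul_distrib,
      Finset.prod_pow_eq_pow_sum]
  have hpolar := integral_mul_fun_norm_eq_integral_toSphere_mul volume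
    (f := fun x : EuclideanSpace ℝ ι ↦ ∏ i, x i ^ a i) hhom
    fun r ↦ Real.exp (-r ^ 2)
  have hcard : 0 < Fintype.card ι := Fintype.card_pos
  have hexp : ((Fintype.card ι - 1 + ∑ i, a i : ℕ) : ℝ) + 1 = ∑ i, a i + Fintype.card ι := by
    push_cast [Nat.cast_sub hcard]
    ring
  rw [integral_prod_pow_mul_exp_neg_norm_sq, finrank_euclideanSpace,
    integral_Ioi_pow_mul_exp_neg_sq, hexp] at hpolar
  have hΓ : 0 < Real.Gamma ((∑ i, a i + Fintype.card ι) / 2) :=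
    Real.Gamma_pos_of_pos (by positivity)
  rw [hpolar, eq_div_iff hΓ.ne']
  ring

theorem integral_toSphere_prod_even_pow (m : ι → ℕ) :
    ∫ v : Metric.sphere (0 : EuclideanSpace ℝ ι) 1, ∏ i, (v : EuclideanSpace ℝ ι) i ^ (2 * m i)
        ∂(volume : Measure (EuclideanSpace ℝ ι)).toSphere =
      2 * (∏ i, Real.Gamma (m i + 1 / 2)) / Real.Gamma (∑ i, m i + Fintype.card ι / 2) := by
  have hexp : (((∑ i, 2 * m i : ℕ) : ℝ) + Fintype.card ι) / 2 =
      (∑ i, m i : ℕ) + Fintype.card ι / 2 := by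
    rw [← Finset.mul_sum]
    push_cast
    ring
  rw [integral_toSphere_prod_pow, hexp]
  simp only [integral_even_pow_mul_exp_neg_sq]

end SphereMoments

section FullySymmetric

variable {ι : Type*} [Fintype ι]

lemma dual_apply_eq_sum_coeff {R : Type*} [CommSemiring R] (L : Dual R (MvPolynomial ι R))
    (p : MvPolynomial ι R) :
    L p = ∑ d ∈ p.support, p.coeff d * L (∏ i, X i ^ d i) := by
  conv_lhs => rw [p.as_sum, map_sum]
  refine Finset.sum_congr rfl fun d _ ↦ ?_
  rw [monomial_eq, ← smul_eq_C_mul, map_smul, smul_eq_mul,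
    Finsupp.prod_fintype _ _ fun _ ↦ pow_zero _]

variable (ι) in
/-- The functionals on polynomials that behave like integration against a signed measure on the
unit sphere invariant under all permutations and sign changes of the coordinates. Invariance under
sign changes is encoded as the vanishing of all moments with an odd exponent. -/
def fullySymmetric : Submodule ℝ (Dual ℝ (MvPolynomial ι ℝ)) where
  carrier := {L | (∀ (σ : Perm ι) (p : MvPolynomial ι ℝ), L (rename σ p) = L p) ∧
    (∀ (a : ι → ℕ) (i : ι), Odd (a i) → L (∏ j, X j ^ a j) = 0) ∧
    ∀ p : MvPolynomial ι ℝ, L ((∑ i, X i ^ 2) * p) = L p}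
  zero_mem' := by simp
  add_mem' := by
    rintro L L' ⟨hperm, hodd, hsphere⟩ ⟨hperm', hodd', hsphere'⟩
    refine ⟨fun σ p ↦ ?_, fun a i hi ↦ ?_, fun p ↦ ?_⟩
    · simp only [LinearMap.add_apply, hperm, hperm']
    · simp only [LinearMap.add_apply, hodd a i hi, hodd' a i hi, add_zero]
    · simp only [LinearMap.add_apply, hsphere, hsphere']
  smul_mem' := by
    rintro c L ⟨hperm, hodd, hsphere⟩
    refine ⟨fun σ p ↦ ?_, fun a i hi ↦ ?_, fun p ↦ ?_⟩
    · simp only [LinearMap.smul_apply, hperm]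
    · simp only [LinearMap.smul_apply, hodd a i hi, smul_zero]
    · simp only [LinearMap.smul_apply, hsphere]

lemma mem_fullySymmetric {L : Dual ℝ (MvPolynomial ι ℝ)} :
    L ∈ fullySymmetric ι ↔ (∀ (σ : Perm ι) (p : MvPolynomial ι ℝ), L (rename σ p) = L p) ∧
      (∀ (a : ι → ℕ) (i : ι), Odd (a i) → L (∏ j, X j ^ a j) = 0) ∧
      ∀ p : MvPolynomial ι ℝ, L ((∑ i, X i ^ 2) * p) = L p :=
  Iff.rfl

lemma eq_zero_of_symm_of_sum_succ_eq {D : ℕ → ℕ → ℕ → ℝ} (hswap₀₁ : ∀ i j k, D j i k = D i j k)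
    (hswap₁₂ : ∀ i j k, D i k j = D i j k)
    (hsum : ∀ i j k, D (i + 1) j k + D i (j + 1) k + D i j (k + 1) = D i j k)
    (h₀₀₀ : D 0 0 0 = 0) (h₁₁₀ : D 1 1 0 = 0) (h₁₁₁ : D 1 1 1 = 0) (h₂₂₀ : D 2 2 0 = 0)
    {i j k : ℕ} (hdeg : i + j + k ≤ 4) : D i j k = 0 := by
  wlog hmax : j ≤ i ∧ k ≤ i generalizing i j k
  · rcases le_total k j with hkj | hjk
    · rw [← hswap₀₁]
      exact this (by omega) (by omega)
    · rw [← hswap₁₂, ← hswap₀₁]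
      exact this (by omega) (by omega)
  wlog hjk : k ≤ j generalizing j k
  · rw [← hswap₁₂]
    exact this (by omega) hmax.symm (by omega)
  have h₁₀₀ : D 1 0 0 = 0 := by
    linarith [hsum 0 0 0, hswap₀₁ 1 0 0, hswap₁₂ 0 1 0]
  have h₂₀₀ : D 2 0 0 = 0 := by
    linarith [hsum 1 0 0, hswap₁₂ 1 1 0]
  have h₂₁₀ : D 2 1 0 = 0 := by
    linarith [hsum 1 1 0, hswap₀₁ 2 1 0]
  have h₃₀₀ : D 3 0 0 = 0 := by
    linarith [hsum 2 0 0, hswap₁₂ 2 1 0]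
  have h₂₁₁ : D 2 1 1 = 0 := by
    linarith [hsum 1 1 1, hswap₀₁ 2 1 1, hswap₁₂ 1 2 1]
  have h₃₁₀ : D 3 1 0 = 0 := by
    linarith [hsum 2 1 0]
  have h₄₀₀ : D 4 0 0 = 0 := by
    linarith [hsum 3 0 0, hswap₁₂ 3 1 0]
  have hi : i ≤ 4 := by omega
  have hj : j ≤ 2 := by omega
  have hk : k ≤ 1 := by omega
  interval_cases i <;> interval_cases j <;> interval_cases k <;> first | assumption | omega

theorem eq_of_mem_fullySymmetric_of_totalDegree_le_nine {L L' : Dual ℝ (MvPolynomial (Fin 3) ℝ)}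
    (hL : L ∈ fullySymmetric (Fin 3)) (hL' : L' ∈ fullySymmetric (Fin 3)) (h₀₀₀ : L 1 = L' 1)
    (h₂₂₀ : L (X 0 ^ 2 * X 1 ^ 2) = L' (X 0 ^ 2 * X 1 ^ 2))
    (h₂₂₂ : L (X 0 ^ 2 * X 1 ^ 2 * X 2 ^ 2) = L' (X 0 ^ 2 * X 1 ^ 2 * X 2 ^ 2))
    (h₄₄₀ : L (X 0 ^ 4 * X 1 ^ 4) = L' (X 0 ^ 4 * X 1 ^ 4))
    {p : MvPolynomial (Fin 3) ℝ} (hp : p.totalDegree ≤ 9) : L p = L' p := by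
  obtain ⟨hperm, hodd, hsphere⟩ := mem_fullySymmetric.1 (sub_mem hL hL')
  have heven (i j k : ℕ) (h : i + j + k ≤ 4) :
      (L - L') (X 0 ^ (2 * i) * X 1 ^ (2 * j) * X 2 ^ (2 * k)) = 0 := by
    refine eq_zero_of_symm_of_sum_succ_eq
      (D := fun i j k ↦ (L - L') (X 0 ^ (2 * i) * X 1 ^ (2 * j) * X 2 ^ (2 * k)))
      (fun i j k ↦ ?_) (fun i j k ↦ ?_) (fun i j k ↦ ?_) ?_ ?_ ?_ ?_ h
    · rw [← hperm (.swap 0 1)]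
      simp [Equiv.swap_apply_of_ne_of_ne, mul_comm]
    · rw [← hperm (.swap 1 2)]
      simp [Equiv.swap_apply_of_ne_of_ne, mul_right_comm]
    · rw [← hsphere (X 0 ^ (2 * i) * X 1 ^ (2 * j) * X 2 ^ (2 * k)), ← map_add, ← map_add,
        Fin.sum_univ_three]
      ring_nf
    all_goals simp [h₀₀₀, h₂₂₀, h₂₂₂, h₄₄₀]
  rw [← sub_eq_zero, ← LinearMap.sub_apply, dual_apply_eq_sum_coeff]
  refine Finset.sum_eq_zero fun d hd ↦ mul_eq_zero_of_right _ ?_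
  by_cases h : ∃ i, Odd (d i)
  · obtain ⟨i, hi⟩ := h
    exact hodd d i hi
  · simp only [not_exists, Nat.not_odd_iff_even, even_iff_exists_two_mul] at h
    choose m hm using h
    have hdeg : ∑ i, d i ≤ 9 := by
      rw [← Finsupp.sum_fintype d (fun _ n ↦ n) fun _ ↦ rfl]
      exact (le_totalDegree hd).trans hp
    simp only [hm, Fin.sum_univ_three] at hdeg
    simpa only [hm, Fin.prod_univ_three] using heven (m 0) (m 1) (m 2) (by omega)

end FullySymmetric

section SphereIntegral

variable (ι : Type*) [Fintype ι]

lemma integrable_eval_toSphere (p : MvPolynomial ι ℝ) :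
    Integrable (fun v : Metric.sphere (0 : EuclideanSpace ℝ ι) 1 ↦
        eval (fun i ↦ (v : EuclideanSpace ℝ ι) i) p)
      (volume : Measure (EuclideanSpace ℝ ι)).toSphere := by
  have hcont : Continuous fun v : Metric.sphere (0 : EuclideanSpace ℝ ι) 1 ↦
      eval (fun i ↦ (v : EuclideanSpace ℝ ι) i) p :=
    (continuous_eval p).comp (by fun_prop)
  exact hcont.integrable_of_hasCompactSupport (.of_compactSpace _)

/-- Integration of polynomials over the unit sphere of `ℝ^ι` with respect to surface measure. -/
noncomputable def sphereIntegral : Dual ℝ (MvPolynomial ι ℝ) where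
  toFun p := ∫ v : Metric.sphere (0 : EuclideanSpace ℝ ι) 1,
    eval (fun i ↦ (v : EuclideanSpace ℝ ι) i) p ∂(volume : Measure (EuclideanSpace ℝ ι)).toSphere
  map_add' p q := by
    simp only [map_add]
    exact integral_add (integrable_eval_toSphere ι p) (integrable_eval_toSphere ι q)
  map_smul' c p := by
    simp only [smul_eval, integral_const_mul, RingHom.id_apply, smul_eq_mul]

variable {ι}

lemma sphereIntegral_apply (p : MvPolynomial ι ℝ) :
    sphereIntegral ι p = ∫ v : Metric.sphere (0 : EuclideanSpace ℝ ι) 1,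
      eval (fun i ↦ (v : EuclideanSpace ℝ ι) i) p
        ∂(volume : Measure (EuclideanSpace ℝ ι)).toSphere :=
  rfl

variable [Nonempty ι]

lemma sphereIntegral_prod_pow (a : ι → ℕ) :
    sphereIntegral ι (∏ i, X i ^ a i) =
      2 * (∏ i, ∫ r : ℝ, r ^ a i * Real.exp (-r ^ 2)) /
        Real.Gamma ((∑ i, a i + Fintype.card ι) / 2) := by
  simp only [sphereIntegral_apply, map_prod, map_pow, eval_X, integral_toSphere_prod_pow]

lemma sphereIntegral_rename (σ : Perm ι) (p : MvPolynomial ι ℝ) :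
    sphereIntegral ι (rename σ p) = sphereIntegral ι p := by
  have hmoment (a : ι → ℕ) :
      sphereIntegral ι (rename σ (∏ i, X i ^ a i)) = sphereIntegral ι (∏ i, X i ^ a i) := by
    have hrename : rename σ (∏ i, X i ^ a i) = (∏ i, X i ^ a (σ.symm i) : MvPolynomial ι ℝ) := by
      simp only [map_prod, map_pow, rename_X]
      exact Fintype.prod_equiv σ _ _ fun i ↦ by rw [σ.symm_apply_apply]
    rw [hrename, sphereIntegral_prod_pow, sphereIntegral_prod_pow, Equiv.sum_comp σ.symm a,
      Equiv.prod_comp σ.symm fun i ↦ ∫ r : ℝ, r ^ a i * Real.exp (-r ^ 2)]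
  calc
    sphereIntegral ι (rename σ p)
      = ∑ d ∈ p.support, p.coeff d * sphereIntegral ι (rename σ (∏ i, X i ^ d i)) :=
        dual_apply_eq_sum_coeff (sphereIntegral ι ∘ₗ (rename σ).toLinearMap) p
    _ = sphereIntegral ι p := by
        simp only [hmoment, ← dual_apply_eq_sum_coeff]

lemma sphereIntegral_mem_fullySymmetric : sphereIntegral ι ∈ fullySymmetric ι := by
  refine mem_fullySymmetric.2 ⟨sphereIntegral_rename, fun a i hi ↦ ?_, fun p ↦ ?_⟩
  · rw [sphereIntegral_prod_pow,
      Finset.prod_eq_zero (Finset.mem_univ i) (integral_odd_pow_mul_exp_neg_sq hi), mul_zero,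
      zero_div]
  · refine integral_congr_ae (.of_forall fun v ↦ ?_)
    have hv : ∑ i, (v : EuclideanSpace ℝ ι) i ^ 2 = 1 := by
      rw [← EuclideanSpace.real_norm_sq_eq, norm_eq_of_mem_sphere, one_pow]
    simp only [map_mul, map_sum, map_pow, eval_X, hv, one_mul]

-- At exponent `0` the truncated subtraction gives `(0 - 1)‼ = 0‼ = 1`, the usual value of `(-1)!!`.
lemma sphereIntegral_fin_three_even (i j k : ℕ) :
    sphereIntegral (Fin 3) (X 0 ^ (2 * i) * X 1 ^ (2 * j) * X 2 ^ (2 * k)) =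
      4 * Real.pi * ((2 * i - 1)‼ * (2 * j - 1)‼ * (2 * k - 1)‼) / (2 * (i + j + k) + 1)‼ := by
  have h := integral_toSphere_prod_even_pow ![i, j, k]
  have hΓ : Real.Gamma ((i + j + k : ℕ) + (3 : ℕ) / 2) =
      (2 * (i + j + k) + 1)‼ * √Real.pi / 2 ^ (i + j + k + 1) := by
    rw [← show 2 * (i + j + k + 1) - 1 = 2 * (i + j + k) + 1 by omega, ← Real.Gamma_nat_add_half]
    push_cast
    ring_nf
  simp only [Fin.prod_univ_three, Fin.sum_univ_three, Fintype.card_fin, Matrix.cons_val, hΓ,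
    Real.Gamma_nat_add_half] at h
  have hdf : ((2 * (i + j + k) + 1)‼ : ℝ) ≠ 0 := Nat.cast_ne_zero.2 (Nat.doubleFactorial_pos _).ne'
  have hpi : √Real.pi ^ 2 = Real.pi := Real.sq_sqrt Real.pi_pos.le
  simp only [sphereIntegral_apply, map_mul, map_pow, eval_X, h]
  field_simp
  rw [hpi]
  ring

end SphereIntegral

section OrbitSum

variable {ι : Type*} [Fintype ι] [DecidableEq ι]

/-- The sum of the values of a polynomial at the points obtained from `v` by all sign changes of its
coordinates. A point occurs once for every sign vector producing it. -/
noncomputable def signSum (v : ι → ℝ) : Dual ℝ (MvPolynomial ι ℝ) :=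
  ∑ s : ι → ℤˣ, (aeval fun i ↦ (s i : ℝ) * v i).toLinearMap

/-- The sum of the values of a polynomial over the orbit of `v` under the hyperoctahedral group of
signed coordinate permutations. A point occurs once for every group element producing it. -/
noncomputable def hyperoctahedralSum (v : ι → ℝ) : Dual ℝ (MvPolynomial ι ℝ) :=
  ∑ σ : Perm ι, signSum (v ∘ σ)

lemma signSum_apply (v : ι → ℝ) (p : MvPolynomial ι ℝ) :
    signSum v p = ∑ s : ι → ℤˣ, eval (fun i ↦ (s i : ℝ) * v i) p := by
  simp only [signSum, LinearMap.sum_apply, AlgHom.toLinearMap_apply, aeval_eq_eval]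

lemma hyperoctahedralSum_apply (v : ι → ℝ) (p : MvPolynomial ι ℝ) :
    hyperoctahedralSum v p = ∑ σ : Perm ι, signSum (v ∘ σ) p := by
  rw [hyperoctahedralSum, LinearMap.sum_apply]

lemma signSum_rename (v : ι → ℝ) (σ : Perm ι) (p : MvPolynomial ι ℝ) :
    signSum v (rename σ p) = signSum (v ∘ σ) p := by
  simp only [signSum_apply, eval_rename]
  exact Fintype.sum_equiv (σ.symm.arrowCongr (.refl ℤˣ)) _ _ fun s ↦ rfl

lemma signSum_prod_pow (v : ι → ℝ) (a : ι → ℕ) :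
    signSum v (∏ i, X i ^ a i) = ∏ i, (1 + (-1) ^ a i) * v i ^ a i := by
  simp only [signSum_apply, map_prod, map_pow, eval_X]
  rw [← Fintype.prod_sum fun i (s : ℤˣ) ↦ ((s : ℝ) * v i) ^ a i]
  refine Finset.prod_congr rfl fun i _ ↦ ?_
  rw [UnitsInt.univ, Finset.sum_pair (by decide)]
  push_cast
  ring

lemma signSum_sum_sq_mul (v : ι → ℝ) (p : MvPolynomial ι ℝ) :
    signSum v ((∑ i, X i ^ 2) * p) = (∑ i, v i ^ 2) * signSum v p := by
  have hsq (s : ℤˣ) : (s : ℝ) ^ 2 = 1 := by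
    rcases Int.units_eq_one_or s with rfl | rfl <;> norm_num
  simp only [signSum_apply, map_mul, map_sum, map_pow, eval_X, mul_pow, hsq, one_mul,
    Finset.mul_sum]

lemma hyperoctahedralSum_mem_fullySymmetric {v : ι → ℝ} (hv : ∑ i, v i ^ 2 = 1) :
    hyperoctahedralSum v ∈ fullySymmetric ι := by
  refine mem_fullySymmetric.2 ⟨fun τ p ↦ ?_, fun a i hi ↦ ?_, fun p ↦ ?_⟩
  · simp only [hyperoctahedralSum_apply, signSum_rename]
    exact Fintype.sum_equiv (Equiv.mulRight τ) _ _ fun σ ↦ rfl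
  · simp only [hyperoctahedralSum_apply, signSum_prod_pow]
    refine Finset.sum_eq_zero fun σ _ ↦ Finset.prod_eq_zero (Finset.mem_univ i) ?_
    rw [hi.neg_one_pow, add_neg_cancel, zero_mul]
  · simp only [hyperoctahedralSum_apply, signSum_sum_sq_mul, Function.comp_apply]
    simp only [Equiv.sum_comp _ fun i ↦ v i ^ 2, hv, one_mul]

lemma sum_comp_perm_fin_three {α M : Type*} [AddCommMonoid M] (f : (Fin 3 → α) → M) (a b c : α) :
    ∑ σ : Perm (Fin 3), f (![a, b, c] ∘ σ) =
      f ![a, b, c] + f ![a, c, b] + f ![b, a, c] + f ![b, c, a] + f ![c, a, b] + f ![c, b, a] := by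
  have huniv : (Finset.univ : Finset (Perm (Fin 3))) =
      {1, c[1, 2], c[0, 1], c[0, 1, 2], c[0, 2, 1], c[0, 2]} := by decide
  have hcomp (σ : Perm (Fin 3)) :
      ![a, b, c] ∘ σ = ![![a, b, c] (σ 0), ![a, b, c] (σ 1), ![a, b, c] (σ 2)] := by
    ext i
    fin_cases i <;> rfl
  simp only [huniv, hcomp]
  repeat rw [Finset.sum_insert (by decide)]
  rw [Finset.sum_singleton]
  simp only [add_assoc]
  rfl

lemma sum_pi_fin_three {α M : Type*} [Fintype α] [AddCommMonoid M] (f : (Fin 3 → α) → M) :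
    ∑ s, f s = ∑ a, ∑ b, ∑ c, f ![a, b, c] := by
  simp only [← (Fin.consEquiv fun _ ↦ α).sum_comp, Fintype.sum_prod_type, Fintype.sum_unique]
  rfl

lemma signSum_fin_three (a b c : ℝ) (p : MvPolynomial (Fin 3) ℝ) :
    signSum ![a, b, c] p =
      eval ![a, b, c] p + eval ![a, b, -c] p + eval ![a, -b, c] p + eval ![a, -b, -c] p +
      eval ![-a, b, c] p + eval ![-a, b, -c] p + eval ![-a, -b, c] p + eval ![-a, -b, -c] p := by
  have hmul (r s t : ℤˣ) : (fun i ↦ ((![r, s, t] i : ℤˣ) : ℝ) * ![a, b, c] i) =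
      ![(r : ℝ) * a, s * b, t * c] := by
    ext i
    fin_cases i <;> rfl
  simp only [signSum_apply, sum_pi_fin_three, hmul, UnitsInt.univ,
    Finset.sum_pair (show (1 : ℤˣ) ≠ -1 by decide)]
  push_cast
  simp only [one_mul, neg_mul, add_assoc]

lemma hyperoctahedralSum_fin_three (a b c : ℝ) (p : MvPolynomial (Fin 3) ℝ) :
    hyperoctahedralSum ![a, b, c] p =
      signSum ![a, b, c] p + signSum ![a, c, b] p + signSum ![b, a, c] p +
      signSum ![b, c, a] p + signSum ![c, a, b] p + signSum ![c, b, a] p := by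
  rw [hyperoctahedralSum_apply, sum_comp_perm_fin_three fun v ↦ signSum v p]

end OrbitSum

section Rule

/-- The 38-point fully symmetric rule with nodes the signed permutations of `(1, 0, 0)`,
`(0, γ, δ)` and `(ε, ε, ε)`. Each weight is divided by the order of the stabilizer of its node in
the hyperoctahedral group, namely `8`, `2` and `6`. -/
noncomputable def rule38 (γ δ ε : ℝ) : Dual ℝ (MvPolynomial (Fin 3) ℝ) :=
  (4 * Real.pi / 105 / 8) • hyperoctahedralSum ![1, 0, 0] +
    (4 * Real.pi / 35 / 2) • hyperoctahedralSum ![0, γ, δ] +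
    (9 * Real.pi / 70 / 6) • hyperoctahedralSum ![ε, ε, ε]

variable {γ δ ε : ℝ}

lemma rule38_apply (p : MvPolynomial (Fin 3) ℝ) :
    rule38 γ δ ε p = 4 * Real.pi / 105 / 8 * hyperoctahedralSum ![1, 0, 0] p +
      4 * Real.pi / 35 / 2 * hyperoctahedralSum ![0, γ, δ] p +
      9 * Real.pi / 70 / 6 * hyperoctahedralSum ![ε, ε, ε] p := by
  simp only [rule38, LinearMap.add_apply, LinearMap.smul_apply, smul_eq_mul]

lemma rule38_mem_fullySymmetric (hadd : γ ^ 2 + δ ^ 2 = 1) (hε : ε ^ 2 = 1 / 3) :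
    rule38 γ δ ε ∈ fullySymmetric (Fin 3) := by
  refine add_mem (add_mem ?_ ?_) ?_ <;>
    refine Submodule.smul_mem _ _ (hyperoctahedralSum_mem_fullySymmetric ?_) <;>
    simp only [Fin.sum_univ_three, Matrix.cons_val] <;>
    linarith

lemma rule38_one : rule38 γ δ ε 1 = 4 * Real.pi := by
  simp only [rule38_apply, hyperoctahedralSum_fin_three, signSum_fin_three, map_one]
  ring

lemma rule38_X_sq_mul_X_sq (hmul : γ ^ 2 * δ ^ 2 = 1 / 6) (hε : ε ^ 2 = 1 / 3) :
    rule38 γ δ ε (X 0 ^ 2 * X 1 ^ 2) = 4 * Real.pi / 15 :=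
  calc
    rule38 γ δ ε (X 0 ^ 2 * X 1 ^ 2)
      = 32 * Real.pi / 35 * (γ ^ 2 * δ ^ 2) + 36 * Real.pi / 35 * (ε ^ 2) ^ 2 := by
        simp only [rule38_apply, hyperoctahedralSum_fin_three, signSum_fin_three, map_mul, map_pow,
          eval_X, Matrix.cons_val]
        ring
    _ = 4 * Real.pi / 15 := by
        rw [hmul, hε]
        ring

lemma rule38_X_sq_mul_X_sq_mul_X_sq (hε : ε ^ 2 = 1 / 3) :
    rule38 γ δ ε (X 0 ^ 2 * X 1 ^ 2 * X 2 ^ 2) = 4 * Real.pi / 105 :=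
  calc
    rule38 γ δ ε (X 0 ^ 2 * X 1 ^ 2 * X 2 ^ 2) = 36 * Real.pi / 35 * (ε ^ 2) ^ 3 := by
        simp only [rule38_apply, hyperoctahedralSum_fin_three, signSum_fin_three, map_mul, map_pow,
          eval_X, Matrix.cons_val]
        ring
    _ = 4 * Real.pi / 105 := by
        rw [hε]
        ring

lemma rule38_X_pow_four_mul_X_pow_four (hmul : γ ^ 2 * δ ^ 2 = 1 / 6) (hε : ε ^ 2 = 1 / 3) :
    rule38 γ δ ε (X 0 ^ 4 * X 1 ^ 4) = 4 * Real.pi / 105 :=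
  calc
    rule38 γ δ ε (X 0 ^ 4 * X 1 ^ 4)
      = 32 * Real.pi / 35 * (γ ^ 2 * δ ^ 2) ^ 2 + 36 * Real.pi / 35 * (ε ^ 2) ^ 4 := by
        simp only [rule38_apply, hyperoctahedralSum_fin_three, signSum_fin_three, map_mul, map_pow,
          eval_X, Matrix.cons_val]
        ring
    _ = 4 * Real.pi / 105 := by
        rw [hmul, hε]
        ring

theorem sphereIntegral_fin_three_eq_rule38 (hadd : γ ^ 2 + δ ^ 2 = 1)
    (hmul : γ ^ 2 * δ ^ 2 = 1 / 6) (hε : ε ^ 2 = 1 / 3) {p : MvPolynomial (Fin 3) ℝ}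
    (hp : p.totalDegree ≤ 9) : sphereIntegral (Fin 3) p = rule38 γ δ ε p := by
  refine eq_of_mem_fullySymmetric_of_totalDegree_le_nine sphereIntegral_mem_fullySymmetric
    (rule38_mem_fullySymmetric hadd hε) ?_ ?_ ?_ ?_ hp
  · have hsphere : sphereIntegral (Fin 3) 1 = 4 * Real.pi := by
      simpa using sphereIntegral_fin_three_even 0 0 0
    rw [hsphere, rule38_one]
  · have hsphere : sphereIntegral (Fin 3) (X 0 ^ 2 * X 1 ^ 2) = 4 * Real.pi / 15 := by
      simpa [Nat.doubleFactorial] using sphereIntegral_fin_three_even 1 1 0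
    rw [hsphere, rule38_X_sq_mul_X_sq hmul hε]
  · have hsphere : sphereIntegral (Fin 3) (X 0 ^ 2 * X 1 ^ 2 * X 2 ^ 2) = 4 * Real.pi / 105 := by
      simpa [Nat.doubleFactorial] using sphereIntegral_fin_three_even 1 1 1
    rw [hsphere, rule38_X_sq_mul_X_sq_mul_X_sq hε]
  · have hsphere : sphereIntegral (Fin 3) (X 0 ^ 4 * X 1 ^ 4) = 4 * Real.pi / 105 := by
      have heven := sphereIntegral_fin_three_even 2 2 0
      norm_num [Nat.doubleFactorial] at heven
      linarith
    rw [hsphere, rule38_X_pow_four_mul_X_pow_four hmul hε]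

end Rule

end SphereCubature

/-- Let `γ = √((1 − 1/√3)/2)` and `δ = √((1 + 1/√3)/2)`.  The 38-point fully
symmetric rule with weight `4π/105` at the six points `(±1,0,0), (0,±1,0), (0,0,±1)`; weight
`4π/35` at the twenty-four points whose coordinates are a permutation of `(±γ, ±δ, 0)`; and
weight `9π/70` at the eight points `(±1/√3, ±1/√3, ±1/√3)`, is a cubature rule of degree 9
for `U₃`. -/
theorem degree9_rule_38pt (γ δ ε : ℝ) (hγ : γ = Real.sqrt ((1 - 1 / Real.sqrt 3) / 2))
    (hδ : δ = Real.sqrt ((1 + 1 / Real.sqrt 3) / 2)) (hε : ε = 1 / Real.sqrt 3)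
    (p : MvPolynomial (Fin 3) ℝ) (hp : p.totalDegree ≤ 9) :
    ∫ v : Metric.sphere (0 : EuclideanSpace ℝ (Fin 3)) 1,
        eval (fun i => (v : EuclideanSpace ℝ (Fin 3)) i) p
      ∂((volume : Measure (EuclideanSpace ℝ (Fin 3))).toSphere) =
      (4 * Real.pi / 105) *
        (eval ![1, 0, 0] p +
          eval ![-1, 0, 0] p +
          eval ![0, 1, 0] p +
          eval ![0, -1, 0] p +
          eval ![0, 0, 1] p +
          eval ![0, 0, -1] p) +
      (4 * Real.pi / 35) *
        (eval ![0, γ, δ] p +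
          eval ![0, γ, -δ] p +
          eval ![0, -γ, δ] p +
          eval ![0, -γ, -δ] p +
          eval ![0, δ, γ] p +
          eval ![0, δ, -γ] p +
          eval ![0, -δ, γ] p +
          eval ![0, -δ, -γ] p +
          eval ![γ, 0, δ] p +
          eval ![γ, 0, -δ] p +
          eval ![-γ, 0, δ] p +
          eval ![-γ, 0, -δ] p +
          eval ![δ, 0, γ] p +
          eval ![δ, 0, -γ] p +
          eval ![-δ, 0, γ] p +
          eval ![-δ, 0, -γ] p +
          eval ![γ, δ, 0] p +
          eval ![γ, -δ, 0] p +
          eval ![-γ, δ, 0] p +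
          eval ![-γ, -δ, 0] p +
          eval ![δ, γ, 0] p +
          eval ![δ, -γ, 0] p +
          eval ![-δ, γ, 0] p +
          eval ![-δ, -γ, 0] p) +
      (9 * Real.pi / 70) *
        (eval ![ε, ε, ε] p +
          eval ![ε, ε, -ε] p +
          eval ![ε, -ε, ε] p +
          eval ![ε, -ε, -ε] p +
          eval ![-ε, ε, ε] p +
          eval ![-ε, ε, -ε] p +
          eval ![-ε, -ε, ε] p +
          eval ![-ε, -ε, -ε] p) := by
  have h3 : √3 ^ 2 = (3 : ℝ) := Real.sq_sqrt (by norm_num)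
  have hε2 : ε ^ 2 = 1 / 3 := by rw [hε, div_pow, h3, one_pow]
  have hγ2 : γ ^ 2 = (1 - ε) / 2 := by rw [hγ, ← hε, Real.sq_sqrt (by nlinarith)]
  have hδ2 : δ ^ 2 = (1 + ε) / 2 := by rw [hδ, ← hε, Real.sq_sqrt (by nlinarith)]
  have hadd : γ ^ 2 + δ ^ 2 = 1 := by linear_combination hγ2 + hδ2
  have hmul : γ ^ 2 * δ ^ 2 = 1 / 6 := by
    rw [hγ2, hδ2]
    linear_combination -hε2 / 4
  rw [← SphereCubature.sphereIntegral_apply,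
    SphereCubature.sphereIntegral_fin_three_eq_rule38 hadd hmul hε2 hp]
  simp only [SphereCubature.rule38_apply, SphereCubature.hyperoctahedralSum_fin_three,
    SphereCubature.signSum_fin_three, neg_zero]
  ring
end

section
/- Let m ≥ 1 and let {(y_j, A_j)}_{j=1}^m be a quadrature rule on [−1, 1] that is exact for all polynomials of degree at most 2m − 1. For k = 1, …, 2m set φ_k = (2k − 1)π/(2m), and consider the 2m²-point product rule on U₃ whose points are P_{j,k} = ( √(1 − y_j²) cos(φ_k), √(1 − y_j²) sin(φ_k), y_j ) with weights B_{j,k} = (π/m) A_j. Then this rule is a cubature rule of degree 2m − 1 for U₃: for every polynomial p in three variables of total degree at most 2m − 1, Σ_{j=1}^m Σ_{k=1}^{2m} (π/m) A_j · p(P_{j,k}) = ∫_{U₃} p dσ. -/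
open MeasureTheory

/-!
By Archimedes' hat-box theorem, surface measure on the sphere is `dt dθ` in the coordinates height
`t` and longitude `θ`. On each parallel a polynomial of degree at most `d` is a trigonometric
polynomial of degree at most `d` in `θ`, which any `N > d` equally spaced longitudes integrate
exactly. Since odd powers of the radius `√(1 - t ^ 2)` come with a vanishing moment, the integral
over a parallel is itself a polynomial in `t` of degree at most `d`, so a quadrature rule exact to
degree `d` finishes the job. The nodes `y j` of an `m`-point rule of degree `2 * m - 1` lie in
`(-1, 1)`, because `(X - y j) * ∏ i ≠ j, (X - y i) ^ 2` integrates to zero and so cannot have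
constant sign.
-/

open Set Real
open scoped ENNReal Pointwise

/-- The point of the unit sphere with height `t` and longitude `θ` (Lambert's cylindrical
coordinates); it lies on the sphere only for `t ^ 2 ≤ 1`, since `√` vanishes on negatives. -/
noncomputable def spherePoint (t θ : ℝ) : EuclideanSpace ℝ (Fin 3) :=
  !₂[√(1 - t ^ 2) * cos θ, √(1 - t ^ 2) * sin θ, t]

lemma measurePreserving_toLp_rotate :
    MeasurePreserving (fun w : ℝ × ℝ × ℝ ↦ (!₂[w.2.1, w.2.2, w.1] : EuclideanSpace ℝ (Fin 3))) := by
  have hsplit := (volume_preserving_piFinSuccAbove (fun _ : Fin 3 ↦ ℝ) 2).symm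
  have htwo := (volume_preserving_finTwoArrow ℝ).symm
  convert (PiLp.volume_preserving_toLp (Fin 3)).comp
    (hsplit.comp ((MeasurePreserving.id (volume : Measure ℝ)).prod htwo)) using 1
  swap
  · rfl
  ext w i
  fin_cases i <;> rfl

lemma lintegral_euclideanSpace_fin_three {F : EuclideanSpace ℝ (Fin 3) → ℝ≥0∞}
    (hF : Measurable F) :
    ∫⁻ x, F x = ∫⁻ z, ∫⁻ ρ in Ioi 0, ∫⁻ θ in Ioo (-π) π,
      .ofReal ρ * F !₂[ρ * cos θ, ρ * sin θ, z] := by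
  have hmeas : Measurable fun w : ℝ × ℝ × ℝ ↦ F !₂[w.2.1, w.2.2, w.1] :=
    hF.comp measurePreserving_toLp_rotate.measurable
  rw [← measurePreserving_toLp_rotate.lintegral_comp hF, Measure.volume_eq_prod,
    lintegral_prod _ hmeas.aemeasurable]
  refine lintegral_congr fun z ↦ ?_
  rw [← lintegral_comp_polarCoord_symm, polarCoord_target, Measure.volume_eq_prod,
    ← Measure.prod_restrict, lintegral_prod]
  · simp [polarCoord_symm_apply]
  · fun_prop

lemma lintegral_halfPlane_polarCoord {H : ℝ × ℝ → ℝ≥0∞} (hH : Measurable H) :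
    ∫⁻ z, ∫⁻ ρ in Ioi 0, H (z, ρ) =
      ∫⁻ r in Ioi 0, ∫⁻ ψ in Ioo 0 π, .ofReal r * H (r * cos ψ, r * sin ψ) := by
  have hset : MeasurableSet (univ ×ˢ Ioi 0 : Set (ℝ × ℝ)) :=
    MeasurableSet.univ.prod measurableSet_Ioi
  calc
    ∫⁻ z, ∫⁻ ρ in Ioi 0, H (z, ρ) = ∫⁻ w, (univ ×ˢ Ioi 0).indicator H w := by
      rw [lintegral_indicator hset, Measure.volume_eq_prod, ← Measure.prod_restrict,
        lintegral_prod _ hH.aemeasurable, Measure.restrict_univ]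
    _ = ∫⁻ r in Ioi 0, ∫⁻ ψ in Ioo (-π) π,
          .ofReal r * (univ ×ˢ Ioi 0).indicator H (r * cos ψ, r * sin ψ) := by
      rw [← lintegral_comp_polarCoord_symm, polarCoord_target, Measure.volume_eq_prod,
        ← Measure.prod_restrict, lintegral_prod]
      · simp [polarCoord_symm_apply]
      · have := hH.indicator hset
        fun_prop
    _ = _ := by
      refine setLIntegral_congr_fun measurableSet_Ioi fun r hr ↦ ?_
      have hsub : Ioo (0 : ℝ) π ⊆ Ioo (-π) π := Ioo_subset_Ioo_left (by linarith [pi_pos])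
      rw [← inter_eq_left.2 hsub, ← setLIntegral_indicator measurableSet_Ioo]
      refine setLIntegral_congr_fun measurableSet_Ioo fun ψ hψ ↦ ?_
      have hupper : 0 < r * sin ψ ↔ ψ ∈ Ioo 0 π := by
        rw [mul_pos_iff_of_pos_left hr]
        refine ⟨fun hsin ↦ ⟨?_, hψ.2⟩, fun h ↦ sin_pos_of_mem_Ioo h⟩
        contrapose! hsin
        exact sin_nonpos_of_nonpos_of_neg_pi_le hsin hψ.1.le
      by_cases h : ψ ∈ Ioo 0 π <;> simp [indicator, hupper, h, -mem_Ioo]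

lemma lintegral_sin_mul_comp_cos (h : ℝ → ℝ≥0∞) :
    ∫⁻ ψ in Ioo 0 π, .ofReal (sin ψ) * h (cos ψ) = ∫⁻ t in Ioc (-1) 1, h t := by
  rw [restrict_Ioc_eq_restrict_Icc, ← bijOn_cos.image_eq,
    lintegral_image_eq_lintegral_deriv_mul_of_antitoneOn measurableSet_Icc
      (fun ψ _ ↦ (hasDerivAt_cos ψ).hasDerivWithinAt) antitoneOn_cos,
    ← restrict_Ioo_eq_restrict_Icc]
  simp only [neg_neg]

lemma lintegral_halfPlane_eq_lintegral_height {H : ℝ × ℝ → ℝ≥0∞} (hH : Measurable H) :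
    ∫⁻ z, ∫⁻ ρ in Ioi 0, .ofReal ρ * H (z, ρ) =
      ∫⁻ r in Ioi 0, .ofReal (r ^ 2) * ∫⁻ t in Ioc (-1) 1, H (r * t, r * √(1 - t ^ 2)) := by
  rw [lintegral_halfPlane_polarCoord (H := fun w ↦ .ofReal w.2 * H w) (by fun_prop)]
  refine setLIntegral_congr_fun measurableSet_Ioi fun r (hr : 0 < r) ↦ ?_
  rw [← lintegral_sin_mul_comp_cos, ← lintegral_const_mul _ (by fun_prop)]
  refine setLIntegral_congr_fun measurableSet_Ioo fun ψ hψ ↦ ?_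
  simp only
  rw [← sin_eq_sqrt_one_sub_cos_sq hψ.1.le hψ.2.le, ENNReal.ofReal_mul hr.le, sq,
    ENNReal.ofReal_mul hr.le]
  ring

lemma lintegral_eq_lintegral_smul_spherePoint {F : EuclideanSpace ℝ (Fin 3) → ℝ≥0∞}
    (hF : Measurable F) :
    ∫⁻ x, F x = ∫⁻ r in Ioi 0, .ofReal (r ^ 2) *
      ∫⁻ t in Ioc (-1) 1, ∫⁻ θ in Ioc (-π) π, F (r • spherePoint t θ) := by
  have hmeas : Measurable fun w : (ℝ × ℝ) × ℝ ↦ F !₂[w.1.2 * cos w.2, w.1.2 * sin w.2, w.1.1] :=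
    hF.comp (by fun_prop)
  rw [lintegral_euclideanSpace_fin_three hF]
  simp only [restrict_Ioo_eq_restrict_Ioc, lintegral_const_mul' _ _ ENNReal.ofReal_ne_top]
  rw [lintegral_halfPlane_eq_lintegral_height
    (H := fun w ↦ ∫⁻ θ in Ioc (-π) π, F !₂[w.2 * cos θ, w.2 * sin θ, w.1])
    hmeas.lintegral_prod_right']
  simp [spherePoint, ← WithLp.toLp_smul, mul_assoc]

lemma norm_spherePoint {t : ℝ} (ht : t ^ 2 ≤ 1) (θ : ℝ) : ‖spherePoint t θ‖ = 1 := by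
  rw [EuclideanSpace.norm_eq, sqrt_eq_one]
  simp [spherePoint, Fin.sum_univ_three, mul_pow, sq_sqrt (sub_nonneg.2 ht), ← mul_add]

lemma Ioo_smul_inter_sphere {E : Type*} [NormedAddCommGroup E] [NormedSpace ℝ E] (s : Set E) :
    Ioo (0 : ℝ) 1 • (Metric.sphere (0 : E) 1 ∩ s) = {x | ‖x‖ ∈ Ioo 0 1 ∧ ‖x‖⁻¹ • x ∈ s} := by
  ext x
  constructor
  · rintro ⟨r, hr, v, ⟨hv, hvs⟩, rfl⟩
    have hnorm : ‖r • v‖ = r := by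
      rw [norm_smul, norm_of_nonneg hr.1.le, mem_sphere_zero_iff_norm.1 hv, mul_one]
    rw [mem_ofPred_eq, hnorm, inv_smul_smul₀ hr.1.ne']
    exact ⟨hr, hvs⟩
  · rintro ⟨hx, hxs⟩
    exact ⟨‖x‖, hx, ‖x‖⁻¹ • x, ⟨by simp [norm_smul, hx.1.ne'], hxs⟩, smul_inv_smul₀ hx.1.ne' x⟩

lemma lintegral_Ioo_ofReal_sq : ∫⁻ r in Ioo (0 : ℝ) 1, .ofReal (r ^ 2) = (3 : ℝ≥0∞)⁻¹ := by
  rw [restrict_Ioo_eq_restrict_Ioc, ← ofReal_integral_eq_lintegral_ofReal,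
    ← intervalIntegral.integral_of_le zero_le_one, integral_pow]
  · norm_num [ENNReal.ofReal_div_of_pos]
  · exact ((continuous_pow 2).integrableOn_Ioc)
  · exact ae_of_all _ fun r ↦ sq_nonneg r

@[fun_prop]
lemma continuous_spherePoint : Continuous fun w : ℝ × ℝ ↦ spherePoint w.1 w.2 := by
  unfold spherePoint
  fun_prop

lemma volume_cone_eq_lintegral_spherePoint {s : Set (EuclideanSpace ℝ (Fin 3))}
    (hs : MeasurableSet s) :
    volume {x : EuclideanSpace ℝ (Fin 3) | ‖x‖ ∈ Ioo 0 1 ∧ ‖x‖⁻¹ • x ∈ s} =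
      3⁻¹ * ∫⁻ t in Ioc (-1) 1, ∫⁻ θ in Ioc (-π) π, s.indicator 1 (spherePoint t θ) := by
  set cone := {x : EuclideanSpace ℝ (Fin 3) | ‖x‖ ∈ Ioo 0 1 ∧ ‖x‖⁻¹ • x ∈ s} with hcone_def
  have hcone : MeasurableSet cone :=
    (measurableSet_Ioo.preimage measurable_norm).inter (hs.preimage (by fun_prop))
  have hmem {r t : ℝ} (hr : 0 < r) (ht : t ∈ Ioc (-1) 1) (θ : ℝ) :
      r • spherePoint t θ ∈ cone ↔ r ∈ Ioo 0 1 ∧ spherePoint t θ ∈ s := by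
    have hnorm : ‖r • spherePoint t θ‖ = r := by
      rw [norm_smul, norm_spherePoint (by nlinarith [ht.1, ht.2]), norm_of_nonneg hr.le, mul_one]
    rw [hcone_def, mem_ofPred_eq, hnorm, inv_smul_smul₀ hr.ne']
  set K := ∫⁻ t in Ioc (-1) 1, ∫⁻ θ in Ioc (-π) π, s.indicator 1 (spherePoint t θ)
  calc
    volume cone = ∫⁻ r in Ioi 0, .ofReal (r ^ 2) *
        ∫⁻ t in Ioc (-1) 1, ∫⁻ θ in Ioc (-π) π, cone.indicator 1 (r • spherePoint t θ) := by
      rw [← lintegral_indicator_one hcone,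
        lintegral_eq_lintegral_smul_spherePoint (measurable_one.indicator hcone)]
    _ = ∫⁻ r in Ioi 0, (Ioo (0 : ℝ) 1).indicator (fun r ↦ .ofReal (r ^ 2) * K) r := by
      refine setLIntegral_congr_fun measurableSet_Ioi fun r hr ↦ ?_
      by_cases hr1 : r ∈ Ioo 0 1
      · simp only [indicator_of_mem hr1]
        congr 1
        refine setLIntegral_congr_fun measurableSet_Ioc fun t ht ↦ ?_
        refine lintegral_congr fun θ ↦ ?_
        exact indicator_eq_indicator ((hmem hr ht θ).trans (and_iff_right hr1)) rfl
      · simp only [indicator_of_notMem hr1]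
        rw [setLIntegral_congr_fun (g := 0) measurableSet_Ioc fun t ht ↦ ?_]
        · simp
        · simp [indicator, hmem hr ht, hr1, -mem_Ioo]
    _ = 3⁻¹ * K := by
      rw [setLIntegral_indicator measurableSet_Ioo, inter_eq_left.2 Ioo_subset_Ioi_self,
        lintegral_mul_const _ (by fun_prop), lintegral_Ioo_ofReal_sq]

theorem map_coe_toSphere_eq_map_spherePoint :
    (volume : Measure (EuclideanSpace ℝ (Fin 3))).toSphere.map Subtype.val =
      ((volume.restrict (Ioc (-1) 1)).prod (volume.restrict (Ioc (-π) π))).map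
        fun w ↦ spherePoint w.1 w.2 := by
  ext s hs
  have hmeas : Measurable fun w : ℝ × ℝ ↦ spherePoint w.1 w.2 := by fun_prop
  rw [Measure.map_apply measurable_subtype_coe hs,
    Measure.toSphere_apply' _ (hs.preimage measurable_subtype_coe), Subtype.image_preimage_coe,
    Ioo_smul_inter_sphere, volume_cone_eq_lintegral_spherePoint hs, finrank_euclideanSpace_fin,
    Nat.cast_ofNat, ENNReal.mul_inv_cancel_left three_ne_zero ENNReal.ofNat_ne_top,
    ← lintegral_prod (fun w ↦ s.indicator 1 (spherePoint w.1 w.2))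
      ((measurable_one.indicator hs).comp hmeas).aemeasurable,
    ← lintegral_map (measurable_one.indicator hs) hmeas, lintegral_indicator_one hs]

theorem integral_toSphere_eq_integral_spherePoint {f : EuclideanSpace ℝ (Fin 3) → ℝ}
    (hf : Continuous f) :
    ∫ v : Metric.sphere (0 : EuclideanSpace ℝ (Fin 3)) 1, f v ∂volume.toSphere =
      ∫ t in (-1)..1, ∫ θ in (-π)..π, f (spherePoint t θ) := by
  have hint : Integrable (fun w : ℝ × ℝ ↦ f (spherePoint w.1 w.2))
      ((volume.restrict (Ioc (-1) 1)).prod (volume.restrict (Ioc (-π) π))) := by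
    rw [Measure.prod_restrict]
    exact ((hf.comp continuous_spherePoint).integrableOn_Icc (μ := volume)
      (a := (-1, -π)) (b := (1, π))).mono_set <| by
        rw [← Icc_prod_Icc]
        exact prod_mono Ioc_subset_Icc_self Ioc_subset_Icc_self
  rw [← integral_map (φ := Subtype.val) (by fun_prop) hf.aestronglyMeasurable,
    map_coe_toSphere_eq_map_spherePoint,
    integral_map (by fun_prop) hf.aestronglyMeasurable, integral_prod _ hint]
  simp only [intervalIntegral.integral_of_le, neg_le_self pi_pos.le, neg_le_self zero_le_one]

/-- The real trigonometric polynomials of degree at most `d`, spanned by phase-shifted cosines so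
that sines need no separate treatment. -/
def trigPolynomial (d : ℕ) : Submodule ℝ (ℝ → ℝ) :=
  Submodule.span ℝ {f | ∃ n : ℤ, |n| ≤ d ∧ ∃ α : ℝ, f = fun θ ↦ cos (n * θ + α)}

lemma cos_mem_trigPolynomial {d : ℕ} {n : ℤ} (hn : |n| ≤ d) (α : ℝ) :
    (fun θ ↦ cos (n * θ + α)) ∈ trigPolynomial d :=
  Submodule.subset_span ⟨n, hn, α, rfl⟩

lemma trigPolynomial_mono : Monotone trigPolynomial := fun _ _ hde ↦
  Submodule.span_mono fun _ ⟨n, hn, α, hf⟩ ↦ ⟨n, hn.trans (by exact_mod_cast hde), α, hf⟩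

lemma const_mem_trigPolynomial (c : ℝ) (d : ℕ) : (fun _ ↦ c) ∈ trigPolynomial d := by
  have h := (trigPolynomial d).smul_mem c (cos_mem_trigPolynomial (n := 0) (by simp) 0)
  simpa [Pi.smul_def] using h

lemma mul_mem_trigPolynomial {d e : ℕ} {f g : ℝ → ℝ} (hf : f ∈ trigPolynomial d)
    (hg : g ∈ trigPolynomial e) : f * g ∈ trigPolynomial (d + e) := by
  refine Submodule.mul_le.1 ?_ f hf g hg
  rw [trigPolynomial, trigPolynomial, Submodule.span_mul_span, Submodule.span_le]
  rintro _ ⟨_, ⟨n, hn, α, rfl⟩, _, ⟨k, hk, β, rfl⟩, rfl⟩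
  have hsum := cos_mem_trigPolynomial (d := d + e) (n := n + k) (by grind) (α + β)
  have hdiff := cos_mem_trigPolynomial (d := d + e) (n := n - k) (by grind) (α - β)
  rw [SetLike.mem_coe]
  convert (trigPolynomial (d + e)).smul_mem 2⁻¹ (add_mem hdiff hsum) using 1
  ext θ
  have harg_sub : ((n - k : ℤ) : ℝ) * θ + (α - β) = (n * θ + α) - (k * θ + β) := by
    push_cast; ring
  have harg_add : ((n + k : ℤ) : ℝ) * θ + (α + β) = (n * θ + α) + (k * θ + β) := by
    push_cast; ring
  simp only [Pi.mul_apply, Pi.smul_apply, Pi.add_apply, smul_eq_mul, harg_sub, harg_add]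
  linear_combination 2⁻¹ * two_mul_cos_mul_cos (n * θ + α) (k * θ + β)

instance : SetLike.GradedMonoid trigPolynomial where
  one_mem := const_mem_trigPolynomial 1 0
  mul_mem _ _ _ _ := mul_mem_trigPolynomial

lemma continuous_of_mem_trigPolynomial {d : ℕ} {f : ℝ → ℝ} (hf : f ∈ trigPolynomial d) :
    Continuous f := by
  induction hf using Submodule.span_induction with
  | mem f h => obtain ⟨n, -, α, rfl⟩ := h; fun_prop
  | zero => exact continuous_zero
  | add f g _ _ hf hg => exact hf.add hg
  | smul c f _ hf => exact hf.const_smul c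

lemma eval_mem_trigPolynomial {σ : Type*} {f : σ → ℝ → ℝ} (hf : ∀ i, f i ∈ trigPolynomial 1)
    (p : MvPolynomial σ ℝ) :
    (fun θ ↦ MvPolynomial.eval (fun i ↦ f i θ) p) ∈ trigPolynomial p.totalDegree := by
  have hsum : (fun θ ↦ MvPolynomial.eval (fun i ↦ f i θ) p) =
      ∑ e ∈ p.support, p.coeff e • ∏ i ∈ e.support, f i ^ e i := by
    ext θ
    simp [MvPolynomial.eval_eq]
  rw [hsum]
  refine sum_mem fun e he ↦ Submodule.smul_mem _ _ ?_
  refine trigPolynomial_mono (MvPolynomial.le_totalDegree he) ?_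
  simpa [Finsupp.sum] using
    SetLike.prod_pow_mem_graded trigPolynomial (fun _ ↦ 1) f e fun i _ ↦ hf i

lemma sum_cos_equispaced_eq_zero {N : ℕ} {n : ℤ} (hn : n ≠ 0) (hnN : |n| < N) (α : ℝ) :
    ∑ k : Fin N, cos (n * (k * (2 * π / N)) + α) = 0 := by
  have hN : (N : ℝ) ≠ 0 := by
    exact_mod_cast ((abs_nonneg n).trans_lt hnN).ne'
  have hstep : sin (n * (2 * π / N) / 2) ≠ 0 := by
    intro hsin
    obtain ⟨j, hj⟩ := sin_eq_zero_iff.1 hsin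
    have hnj : (n : ℝ) = N * j := by
      field_simp at hj
      linarith
    exact hn (Int.eq_zero_of_abs_lt_dvd ⟨j, by exact_mod_cast hnj⟩ hnN)
  refine (mul_eq_zero.1 ?_).resolve_left hstep
  calc
    sin (n * (2 * π / N) / 2) * ∑ k : Fin N, cos (n * (k * (2 * π / N)) + α)
      = sin (N * (n * (2 * π / N)) / 2) *
          cos ((N - 1) * (n * (2 * π / N)) / 2 + α) := by
        rw [← sin_mul_sum_cos, Finset.sum_range]
        simp only [mul_assoc, mul_comm (_ / (N : ℝ))]
    _ = 0 := by
      rw [show N * (n * (2 * π / N)) / 2 = n * π by field_simp, sin_int_mul_pi, zero_mul]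

lemma integral_cos_eq_zero {n : ℤ} (hn : n ≠ 0) (α : ℝ) :
    ∫ θ in (-π)..π, cos (n * θ + α) = 0 := by
  rw [intervalIntegral.integral_comp_mul_add _ (Int.cast_ne_zero.2 hn), integral_cos,
    ← sin_add_int_mul_two_pi (n * -π + α) n]
  ring_nf

theorem sum_equispaced_eq_integral {d N : ℕ} (hdN : d < N) {f : ℝ → ℝ}
    (hf : f ∈ trigPolynomial d) (φ : ℝ) :
    ∑ k : Fin N, 2 * π / N * f (φ + k * (2 * π / N)) = ∫ θ in (-π)..π, f θ := by
  have hN : (N : ℝ) ≠ 0 := Nat.cast_ne_zero.2 (by omega)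
  induction hf using Submodule.span_induction with
  | mem f h =>
    obtain ⟨n, hn, α, rfl⟩ := h
    obtain rfl | hn0 := eq_or_ne n 0
    · simp only [Int.cast_zero, zero_mul, zero_add, Finset.sum_const, Finset.card_univ,
        Fintype.card_fin, nsmul_eq_mul, intervalIntegral.integral_const, sub_neg_eq_add,
        smul_eq_mul]
      field_simp
      ring
    · have hphase (k : ℕ) : n * (φ + k * (2 * π / N)) + α =
          n * (k * (2 * π / N)) + (n * φ + α) := by ring
      simp only [integral_cos_eq_zero hn0, ← Finset.mul_sum, hphase]
      rw [sum_cos_equispaced_eq_zero hn0 (hn.trans_lt (by exact_mod_cast hdN)), mul_zero]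
  | zero => simp
  | add f g hf hg ihf ihg =>
    simp only [Pi.add_apply, mul_add, Finset.sum_add_distrib]
    rw [ihf, ihg, intervalIntegral.integral_add]
    · exact (continuous_of_mem_trigPolynomial hf).intervalIntegrable _ _
    · exact (continuous_of_mem_trigPolynomial hg).intervalIntegrable _ _
  | smul c f _ ih =>
    simp only [Pi.smul_apply, smul_eq_mul, mul_left_comm _ c]
    rw [← Finset.mul_sum, ih, intervalIntegral.integral_const_mul]

lemma eval_spherePoint_mem_trigPolynomial (p : MvPolynomial (Fin 3) ℝ) (t : ℝ) :
    (fun θ ↦ MvPolynomial.eval (spherePoint t θ).ofLp p) ∈ trigPolynomial p.totalDegree := by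
  refine eval_mem_trigPolynomial (f := fun i θ ↦ spherePoint t θ i) (fun i ↦ ?_) p
  have hcos : cos ∈ trigPolynomial 1 := by
    simpa using cos_mem_trigPolynomial (d := 1) (n := 1) (by simp) 0
  have hsin : sin ∈ trigPolynomial 1 := by
    simpa [← sub_eq_add_neg, cos_sub_pi_div_two] using
      cos_mem_trigPolynomial (d := 1) (n := 1) (by simp) (-(π / 2))
  fin_cases i
  · exact Submodule.smul_mem _ _ hcos
  · exact Submodule.smul_mem _ _ hsin
  · exact const_mem_trigPolynomial t 1

lemma integral_eq_zero_of_antiperiodic {f : ℝ → ℝ} {c : ℝ} (hf : Function.Antiperiodic f c)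
    (a : ℝ) : ∫ x in a..a + 2 * c, f x = 0 := by
  have hshift : ∫ x in a..a + 2 * c, f (x + c) = ∫ x in a..a + 2 * c, f x := by
    rw [intervalIntegral.integral_comp_add_right, add_right_comm]
    exact hf.periodic_two_mul.intervalIntegral_add_eq _ _
  simp only [hf _, intervalIntegral.integral_neg] at hshift
  linarith

section Parallel
open MvPolynomial (eval)

/-- The mixed moment of `cos` and `sin` over a full turn. -/
noncomputable def circleMoment (a b : ℕ) : ℝ := ∫ θ in (-π)..π, cos θ ^ a * sin θ ^ b

lemma circleMoment_eq_zero {a b : ℕ} (h : Odd (a + b)) : circleMoment a b = 0 := by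
  have hanti : Function.Antiperiodic (fun θ ↦ cos θ ^ a * sin θ ^ b) π := fun θ ↦ by
    simp only [cos_add_pi, sin_add_pi]
    rw [neg_pow, neg_pow (sin θ), mul_mul_mul_comm, ← pow_add, h.neg_one_pow, neg_one_mul]
  simpa [circleMoment, two_mul] using integral_eq_zero_of_antiperiodic hanti (-π)

/-- The polynomial in the height `t` whose value for `t ^ 2 ≤ 1` is the integral of `p` over the
parallel of the unit sphere at height `t`, with respect to longitude. Monomials of odd degree in the
horizontal coordinates have zero moment, so truncating the exponent `(e 0 + e 1) / 2` is harmless.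
-/
noncomputable def parallelIntegral (p : MvPolynomial (Fin 3) ℝ) : Polynomial ℝ :=
  ∑ e ∈ p.support, .C (p.coeff e * circleMoment (e 0) (e 1)) *
    ((1 - .X ^ 2) ^ ((e 0 + e 1) / 2) * .X ^ e 2)

lemma natDegree_parallelIntegral_le (p : MvPolynomial (Fin 3) ℝ) :
    (parallelIntegral p).natDegree ≤ p.totalDegree := by
  refine Polynomial.natDegree_sum_le_of_forall_le _ _ fun e he ↦ ?_
  have hdeg : e 0 + e 1 + e 2 ≤ p.totalDegree := by
    simpa [Finsupp.sum_fintype, Fin.sum_univ_three] using MvPolynomial.le_totalDegree he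
  calc
    _ ≤ (e 0 + e 1) / 2 * 2 + e 2 := by compute_degree
    _ ≤ p.totalDegree := by omega

lemma integral_monomial_spherePoint {t : ℝ} (ht : t ^ 2 ≤ 1) (a b c : ℕ) :
    ∫ θ in (-π)..π, spherePoint t θ 0 ^ a * spherePoint t θ 1 ^ b * spherePoint t θ 2 ^ c =
      circleMoment a b * ((1 - t ^ 2) ^ ((a + b) / 2) * t ^ c) := by
  have hfactor :
      ∫ θ in (-π)..π, spherePoint t θ 0 ^ a * spherePoint t θ 1 ^ b * spherePoint t θ 2 ^ c =
        circleMoment a b * (√(1 - t ^ 2) ^ (a + b) * t ^ c) := by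
    rw [circleMoment, ← intervalIntegral.integral_mul_const]
    refine intervalIntegral.integral_congr fun θ _ ↦ ?_
    simp only [spherePoint, Matrix.cons_val_zero, Matrix.cons_val_one, Matrix.cons_val]
    ring
  rw [hfactor]
  obtain heven | hodd := Nat.even_or_odd (a + b)
  · rw [← Nat.two_mul_div_two_of_even heven, pow_mul, sq_sqrt (sub_nonneg.2 ht),
      Nat.two_mul_div_two_of_even heven]
  · simp only [circleMoment_eq_zero hodd, zero_mul]

lemma eval_parallelIntegral (p : MvPolynomial (Fin 3) ℝ) {t : ℝ} (ht : t ^ 2 ≤ 1) :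
    (parallelIntegral p).eval t = ∫ θ in (-π)..π, eval (spherePoint t θ).ofLp p := by
  simp only [MvPolynomial.eval_eq', Fin.prod_univ_three]
  rw [intervalIntegral.integral_finsetSum]
  · simp [parallelIntegral, Polynomial.eval_finsetSum, integral_monomial_spherePoint ht,
      mul_assoc (MvPolynomial.coeff _ _)]
  · intro e _
    refine Continuous.intervalIntegrable ?_ _ _
    fun_prop

end Parallel

section Gauss
open Polynomial

/-- The quadrature rule with nodes `y` and weights `A` integrates every polynomial of degree at most
`d` exactly over `[a, b]`. -/
def IsExactQuadrature {ι : Type*} [Fintype ι] (a b : ℝ) (y A : ι → ℝ) (d : ℕ) : Prop :=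
  ∀ q : ℝ[X], q.natDegree ≤ d → ∑ j, A j * q.eval (y j) = ∫ t in a..b, q.eval t

lemma integral_eval_pos {a b : ℝ} (hab : a < b) {q : ℝ[X]} (hq : q ≠ 0)
    (hnonneg : ∀ t ∈ Icc a b, 0 ≤ q.eval t) : 0 < ∫ t in a..b, q.eval t := by
  obtain ⟨t, ht, htq⟩ : ∃ t ∈ Icc a b, q.eval t ≠ 0 := by
    by_contra! hzero
    exact hq (eq_zero_of_infinite_isRoot q ((Icc_infinite hab).mono hzero))
  exact intervalIntegral.integral_pos hab q.continuous.continuousOn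
    (fun s hs ↦ hnonneg s (Ioc_subset_Icc_self hs)) ⟨t, ht, (hnonneg t ht).lt_of_ne' htq⟩

theorem IsExactQuadrature.mem_Ioo {ι : Type*} [Fintype ι] {a b : ℝ} (hab : a < b) {y A : ι → ℝ}
    {d : ℕ} (hrule : IsExactQuadrature a b y A d) (hd : 2 * Fintype.card ι ≤ d + 1) (j : ι) :
    y j ∈ Ioo a b := by
  classical
  set w : ℝ[X] := ∏ i ∈ Finset.univ.erase j, (X - C (y i)) with hw
  have hwmonic : w.Monic := monic_prod_of_monic _ _ fun i _ ↦ monic_X_sub_C _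
  set q := (X - C (y j)) * w ^ 2 with hq
  have hqmonic : q.Monic := (monic_X_sub_C _).mul (hwmonic.pow 2)
  have hqdeg : q.natDegree ≤ d := by
    have hcard : 0 < Fintype.card ι := Fintype.card_pos_iff.2 ⟨j⟩
    have hwdeg : w.natDegree = Fintype.card ι - 1 := by
      simp [hw, natDegree_prod_of_monic _ _ fun i _ ↦ monic_X_sub_C (y i)]
    rw [(monic_X_sub_C _).natDegree_mul (hwmonic.pow 2), hwmonic.natDegree_pow, natDegree_X_sub_C,
      hwdeg]
    omega
  have hqnode (i : ι) : q.eval (y i) = 0 := by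
    obtain rfl | hij := eq_or_ne i j
    · simp [hq]
    · simp [hq, hw, eval_prod, Finset.prod_eq_zero (Finset.mem_erase.2 ⟨hij, Finset.mem_univ i⟩)]
  have hqint : ∫ t in a..b, q.eval t = 0 := by
    simp [← hrule q hqdeg, hqnode]
  have hqeval (t : ℝ) : q.eval t = (t - y j) * w.eval t ^ 2 := by simp [hq]
  refine ⟨?_, ?_⟩ <;> by_contra! hout
  · refine (integral_eval_pos hab hqmonic.ne_zero fun t ht ↦ ?_).ne' hqint
    rw [hqeval]
    exact mul_nonneg (by linarith [ht.1]) (sq_nonneg _)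
  · have hneg : 0 < ∫ t in a..b, (-q).eval t :=
      integral_eval_pos hab (neg_ne_zero.2 hqmonic.ne_zero) fun t ht ↦ by
        rw [eval_neg, hqeval, ← neg_mul]
        exact mul_nonneg (by linarith [ht.2]) (sq_nonneg _)
    simp [hqint] at hneg

end Gauss

theorem product_rule_sphere_general {ι : Type*} [Fintype ι] {y A : ι → ℝ} {d N : ℕ} (hdN : d < N)
    (hrule : IsExactQuadrature (-1) 1 y A d) (hy : ∀ j, y j ^ 2 ≤ 1) (φ : ℝ)
    {p : MvPolynomial (Fin 3) ℝ} (hp : p.totalDegree ≤ d) :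
    ∑ j, ∑ k : Fin N, 2 * π / N * A j *
        MvPolynomial.eval (spherePoint (y j) (φ + k * (2 * π / N))).ofLp p =
      ∫ v : Metric.sphere (0 : EuclideanSpace ℝ (Fin 3)) 1,
        MvPolynomial.eval (v : EuclideanSpace ℝ (Fin 3)).ofLp p ∂volume.toSphere := by
  have hparallel (j : ι) : ∑ k : Fin N, 2 * π / N * A j *
      MvPolynomial.eval (spherePoint (y j) (φ + k * (2 * π / N))).ofLp p =
        A j * (parallelIntegral p).eval (y j) := by
    rw [eval_parallelIntegral p (hy j), ← sum_equispaced_eq_integral (hp.trans_lt hdN)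
      (eval_spherePoint_mem_trigPolynomial p (y j)) φ, Finset.mul_sum]
    exact Finset.sum_congr rfl fun k _ ↦ by ring
  calc
    _ = ∑ j, A j * (parallelIntegral p).eval (y j) := Finset.sum_congr rfl fun j _ ↦ hparallel j
    _ = ∫ t in (-1)..1, (parallelIntegral p).eval t :=
      hrule _ ((natDegree_parallelIntegral_le p).trans hp)
    _ = ∫ t in (-1)..1, ∫ θ in (-π)..π, MvPolynomial.eval (spherePoint t θ).ofLp p :=
      intervalIntegral.integral_congr fun t ht ↦ eval_parallelIntegral p (by
        rw [uIcc_of_le (by norm_num)] at ht; nlinarith [ht.1, ht.2])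
    _ = _ := (integral_toSphere_eq_integral_spherePoint
      (p.continuous_eval.comp (PiLp.continuous_ofLp _ _))).symm

/-- Let `m ≥ 1` and let `{(y j, A j)}` be a quadrature rule on `[−1, 1]` exact
for all polynomials of degree at most `2m − 1`.  For `k = 1, …, 2m` set
`φ_k = (2k − 1)π/(2m)`, and consider the `2m²`-point product rule on `U₃` with points
`P_{j,k} = (√(1 − y_j²) cos φ_k, √(1 − y_j²) sin φ_k, y_j)` and weights `(π/m) A j`.
This rule is a cubature rule of degree `2m − 1` for `U₃`. -/
theorem product_rule_sphere (m : ℕ) (hm : 1 ≤ m) (y A : Fin m → ℝ)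
    (hrule : ∀ q : Polynomial ℝ, q.natDegree ≤ 2 * m - 1 →
      ∑ j, A j * q.eval (y j) = ∫ t in (-1 : ℝ)..1, q.eval t)
    (p : MvPolynomial (Fin 3) ℝ) (hp : p.totalDegree ≤ 2 * m - 1) :
    ∑ j : Fin m, ∑ k : Fin (2 * m),
        Real.pi / m * A j *
          MvPolynomial.eval
            ![Real.sqrt (1 - y j ^ 2) * Real.cos ((2 * (k : ℝ) + 1) * Real.pi / (2 * m)),
              Real.sqrt (1 - y j ^ 2) * Real.sin ((2 * (k : ℝ) + 1) * Real.pi / (2 * m)),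
              y j] p =
      ∫ v : Metric.sphere (0 : EuclideanSpace ℝ (Fin 3)) 1,
          MvPolynomial.eval (fun i => (v : EuclideanSpace ℝ (Fin 3)) i) p
        ∂((volume : Measure (EuclideanSpace ℝ (Fin 3))).toSphere) := by
  have hnodes (j : Fin m) : y j ∈ Ioo (-1) 1 :=
    IsExactQuadrature.mem_Ioo (by norm_num) hrule (by rw [Fintype.card_fin]; omega) j
  rw [← product_rule_sphere_general (N := 2 * m) (by omega) hrule
    (fun j ↦ by nlinarith [(hnodes j).1, (hnodes j).2]) (π / (2 * m)) hp]
  have hm0 : (m : ℝ) ≠ 0 := by positivity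
  have hweight : π / m = 2 * π / (2 * m : ℕ) := by push_cast; field_simp
  have hangle (k : ℕ) :
      (2 * (k : ℝ) + 1) * π / (2 * m) = π / (2 * m) + k * (2 * π / (2 * m : ℕ)) := by
    push_cast; field_simp; ring
  simp only [hweight, hangle]
  rfl
end

section
/- For every m ≥ 1, the m-point Gauß–Chebyshev rule of the first kind, with points y_i = cos((2i − 1)π/(2m)) and constant weights A_i = π/m for i = 1, …, m, is exact of degree 2m − 1 for the weight (1 − y²)^{−1/2} on [−1, 1]: for every polynomial f of degree at most 2m − 1, ∫_{−1}^1 f(y) (1 − y²)^{−1/2} dy = (π/m) Σ_{i=1}^m f( cos((2i − 1)π/(2m)) ). -/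
/-!
The Chebyshev polynomials `T_k` with `k < 2m` span the polynomials of degree at most `2m - 1`, and
the integral and the quadrature sum agree on each of them: both are `π` for `k = 0` and `0` for
`0 < k < 2m`.
-/

open Polynomial.Chebyshev

-- For `x ≤ 0` both sides are the junk value `0`.
theorem sqrt_inv_eq_rpow_neg_one_div_two (x : ℝ) : √x⁻¹ = x ^ (-(1 : ℝ) / 2) := by
  rw [neg_div, Real.rpow_neg_eq_inv_rpow, Real.sqrt_eq_rpow]

theorem integral_measureT_eq_integral_mul_rpow (f : ℝ → ℝ) :
    ∫ y, f y ∂measureT = ∫ y in (-1 : ℝ)..1, f y * (1 - y ^ 2) ^ (-(1 : ℝ) / 2) := by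
  simp only [integral_measureT, sqrt_inv_eq_rpow_neg_one_div_two]

theorem sumZeroes_eq_sum_fin (n : ℕ) (P : Polynomial ℝ) :
    sumZeroes n P =
      Real.pi / n * ∑ i : Fin n, P.eval (Real.cos ((2 * (i : ℝ) + 1) * Real.pi / (2 * n))) := by
  simp only [sumZeroes, Finset.sum_range, div_mul_eq_mul_div]

/-- For every `m ≥ 1`, the `m`-point Gauß–Chebyshev rule of the first kind,
with points `y_i = cos((2i − 1)π/(2m))` and constant weights `π/m`, is exact of degree
`2m − 1` for the weight `(1 − y²)^{−1/2}` on `[−1, 1]`: for every polynomial `f` of degree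
at most `2m − 1`,
`∫_{−1}^1 f(y) (1 − y²)^{−1/2} dy = (π/m) Σ_{i=1}^m f(cos((2i − 1)π/(2m)))`. -/
theorem gauss_chebyshev_rule (m : ℕ) (hm : 1 ≤ m) (f : Polynomial ℝ)
    (hf : f.natDegree ≤ 2 * m - 1) :
    ∫ y in (-1 : ℝ)..1, f.eval y * (1 - y ^ 2) ^ (-(1 : ℝ) / 2) =
      Real.pi / m * ∑ i : Fin m, f.eval (Real.cos ((2 * (i : ℝ) + 1) * Real.pi / (2 * m))) := by
  have hdegree : f.degree < 2 * m :=
    f.degree_le_natDegree.trans_lt (by exact_mod_cast (by omega : f.natDegree < 2 * m))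
  rw [← integral_measureT_eq_integral_mul_rpow, ← sumZeroes_eq_sum_fin]
  exact integral_eq_sumZeroes (by omega) hdegree
end
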